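/- Let n ≥ 2, N = 2ⁿ − 1, F the finite field with 2ⁿ elements, g a generator of F^×, ω = exp(2πi/N), and ψ_q ∈ ℂ^F given by ψ_q(0) = 0, ψ_q(g^j) = ω^{qj}/√N. Fix an 𝔽₂-linear bijection ι : 𝔽₂ⁿ → F and identify ℂ^F with (ℂ²)^{⊗n}. For A ⊆ {0,…,n−1} with |A| = ℓ, let ρ_A be the reduced density matrix of ψ_q on A. Then for every integer q with q ≢ 0 (mod N), the purity satisfies Tr(ρ_A²) ≤ 2^{−ℓ} · (1 + (4^ℓ − 1) · 2^{4−n}). -/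

import Mathlib

open Complex

noncomputable section

/-- Combine a configuration on `A` and a configuration on `Aᶜ` into a full configuration. -/
def mergeCfg {ι : Type*} [DecidableEq ι] (A : Finset ι)
    (x : {i // i ∈ A} → ZMod 2) (y : {i // i ∉ A} → ZMod 2) : ι → ZMod 2 :=
  fun i => if h : i ∈ A then x ⟨i, h⟩ else y ⟨i, h⟩

/-- Reduced density matrix of a state `ψ` on the qubits in `A`. -/
def rdm {ι : Type*} [Fintype ι] [DecidableEq ι] (A : Finset ι)
    (ψ : (ι → ZMod 2) → ℂ) :
    Matrix ({i // i ∈ A} → ZMod 2) ({i // i ∈ A} → ZMod 2) ℂ :=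
  Matrix.of fun x x' => ∑ y : {i // i ∉ A} → ZMod 2,
    ψ (mergeCfg A x y) * (starRingEnd ℂ) (ψ (mergeCfg A x' y))

/-!
Expanding the reduced density matrix in Pauli operators, `2 ^ ℓ` times the purity is the sum of
`|T(α, ψ)| ^ 2`, where `T(α, ψ) = N⁻¹ ∑ z, χ(z) χ⁻¹(z + α) ψ(z)` for the multiplicative character
`χ` of the state; here `α` runs over `2 ^ ℓ` elements of `F` and `ψ` over `2 ^ ℓ` additive
characters. The term `T(0, 1)` is `1`, and the others are at most `2 √(2 ^ n) / N` by the Weil bound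
for mixed character sums.

The Weil bound is proved from scratch, for `α = 1`. The sums over the extensions `K / F` are power
sums of the two inverse roots of an `L`-polynomial over `F[X]`. Summing over all `χ`,
orthogonality leaves a multiple of `∑ ψ(Tr z)` over the `z ∈ K` with `N(z) = N(z + 1)`, and
Hilbert 90 parametrizes these by `z = (x + 1) ^ (q - 1) / (x ^ (q - 1) + (x + 1) ^ (q - 1))`, where
`q = |F|`. The resulting sums count points on hyperelliptic Artin–Schreier curves with one point
at infinity, so Stepanov's method bounds them by `O(√|K|)`. A power sum bound that is uniform in the
extension forces every inverse root to have absolute value at most `√q`.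
-/

section PoleOrder

open Polynomial

variable {K : Type*} [CommRing K] {f h : K[X]} {g : ℕ}

/-- The pole order at infinity of `z = a + b t` in the coordinate ring
`K[X][t] / (t² = f + h t)`, as the degree of its norm down to `K[X]`. It measures poles when
`deg f = 2 g + 1` and `deg h ≤ g`: the curve then has one point at infinity, where `X` and `t`
have poles of order `2` and `2 g + 1`. The zero function has pole order `⊥`. -/
def poleOrder (z : QuadraticAlgebra K[X] f h) : WithBot ℕ :=
  (QuadraticAlgebra.norm z).degree

lemma poleOrder_neg (z : QuadraticAlgebra K[X] f h) : poleOrder (-z) = poleOrder z := by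
  simp [poleOrder]

variable [IsDomain K]

lemma poleOrder_mul (z w : QuadraticAlgebra K[X] f h) :
    poleOrder (z * w) = poleOrder z + poleOrder w := by
  simp [poleOrder, degree_mul]

lemma poleOrder_pow (z : QuadraticAlgebra K[X] f h) (n : ℕ) :
    poleOrder (z ^ n) = n • poleOrder z := by
  simp [poleOrder, degree_pow]

lemma degree_sq_ne_degree_mul_sq (hf : Odd f.natDegree) {a b : K[X]} (hab : a ≠ 0 ∨ b ≠ 0) :
    (a ^ 2).degree ≠ (f * b ^ 2).degree := by
  have hf0 : f ≠ 0 := by rintro rfl; simp at hf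
  by_cases hb : b = 0
  · simpa [hb, -degree_pow] using hab
  by_cases ha : a = 0
  · simpa [ha, -degree_pow, -degree_mul, eq_comm (a := (⊥ : WithBot ℕ))] using
      And.intro hf0 hb
  intro hdeg
  have := natDegree_eq_of_degree_eq hdeg
  rw [natDegree_pow, natDegree_mul hf0 (pow_ne_zero 2 hb), natDegree_pow] at this
  obtain ⟨g, hg⟩ := hf
  omega

lemma degree_mul_mul_lt_max (hh : h.natDegree ≤ g) (hf : f.natDegree = 2 * g + 1) {a b : K[X]}
    (hab : a ≠ 0 ∨ b ≠ 0) : (h * a * b).degree < max (a ^ 2).degree (f * b ^ 2).degree := by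
  have hf0 : f ≠ 0 := by rintro rfl; simp at hf
  by_cases ha : a = 0
  · simp_all [bot_lt_iff_ne_bot, -degree_pow, -degree_mul]
  by_cases hb : b = 0
  · simp_all [bot_lt_iff_ne_bot, -degree_pow, -degree_mul]
  by_cases hh0 : h = 0
  · simpa [hh0, bot_lt_iff_ne_bot, -degree_pow, -degree_mul, hf0] using hab
  rw [degree_eq_natDegree (by simp [*]), degree_eq_natDegree (p := a ^ 2) (by simp [*]),
    degree_eq_natDegree (p := f * b ^ 2) (by simp [*]), lt_max_iff, Nat.cast_lt, Nat.cast_lt,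
    natDegree_mul (by simp [*]) hb, natDegree_mul hh0 ha, natDegree_pow,
    natDegree_mul hf0 (by simp [*]), natDegree_pow]
  omega

theorem poleOrder_eq_max (hh : h.natDegree ≤ g) (hf : f.natDegree = 2 * g + 1)
    (z : QuadraticAlgebra K[X] f h) :
    poleOrder z = max (z.re ^ 2).degree (f * z.im ^ 2).degree := by
  obtain ⟨a, b⟩ := z
  by_cases hab : a = 0 ∧ b = 0
  · simp [poleOrder, QuadraticAlgebra.norm_def, hab.1, hab.2]
  have hab : a ≠ 0 ∨ b ≠ 0 := not_and_or.mp hab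
  have hmax : (a ^ 2 - f * b ^ 2).degree = max (a ^ 2).degree (f * b ^ 2).degree := by
    rcases (degree_sq_ne_degree_mul_sq (hf ▸ odd_two_mul_add_one g) hab).lt_or_gt with hlt | hlt
    · rw [degree_sub_eq_right_of_degree_lt hlt, max_eq_right hlt.le]
    · rw [degree_sub_eq_left_of_degree_lt hlt, max_eq_left hlt.le]
  have hnorm : QuadraticAlgebra.norm (⟨a, b⟩ : QuadraticAlgebra K[X] f h) =
      (a ^ 2 - f * b ^ 2) + h * a * b := by rw [QuadraticAlgebra.norm_def]; ring
  rw [poleOrder, hnorm, degree_add_eq_left_of_degree_lt, hmax]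
  exact hmax ▸ degree_mul_mul_lt_max hh hf hab

lemma poleOrder_eq_bot_iff (hh : h.natDegree ≤ g) (hf : f.natDegree = 2 * g + 1)
    {z : QuadraticAlgebra K[X] f h} : poleOrder z = ⊥ ↔ z = 0 := by
  have hf0 : f ≠ 0 := by rintro rfl; simp at hf
  simp [poleOrder_eq_max hh hf, QuadraticAlgebra.ext_iff, hf0, -degree_pow, -degree_mul]

/-- The numerical form of Riemann–Roch for this curve: `⌈d / 2⌉` powers of `X` and
`⌊d / 2⌋ - g` multiples of `t` have pole order below `d`. -/
lemma poleOrder_lt_iff (hh : h.natDegree ≤ g) (hf : f.natDegree = 2 * g + 1) {d : ℕ}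
    {z : QuadraticAlgebra K[X] f h} : poleOrder z < d ↔
      z.re.degree < ((d + 1) / 2 : ℕ) ∧ z.im.degree < ((d - 2 * g) / 2 : ℕ) := by
  have hf0 : f ≠ 0 := by rintro rfl; simp at hf
  rw [poleOrder_eq_max hh hf, max_lt_iff]
  refine and_congr ?_ ?_
  · by_cases ha : z.re = 0
    · simp [ha]
    rw [degree_eq_natDegree ha, degree_eq_natDegree (pow_ne_zero 2 ha), natDegree_pow, Nat.cast_lt,
      Nat.cast_lt]
    omega
  · by_cases hb : z.im = 0
    · simp [hb]
    rw [degree_eq_natDegree hb, degree_eq_natDegree (mul_ne_zero hf0 (pow_ne_zero 2 hb)),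
      natDegree_mul hf0 (pow_ne_zero 2 hb), natDegree_pow, Nat.cast_lt, Nat.cast_lt]
    omega

lemma poleOrder_sub_lt (hh : h.natDegree ≤ g) (hf : f.natDegree = 2 * g + 1) {d : ℕ}
    {z w : QuadraticAlgebra K[X] f h} (hz : poleOrder z < d) (hw : poleOrder w < d) :
    poleOrder (z - w) < d := by
  simp only [poleOrder_lt_iff hh hf, ← mem_degreeLT] at hz hw ⊢
  exact ⟨Submodule.sub_mem _ hz.1 hw.1, Submodule.sub_mem _ hz.2 hw.2⟩

lemma poleOrder_sum_lt (hh : h.natDegree ≤ g) (hf : f.natDegree = 2 * g + 1) {J : Type*}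
    {s : Finset J} {v : J → QuadraticAlgebra K[X] f h} {d : ℕ}
    (hv : ∀ j ∈ s, poleOrder (v j) < d) : poleOrder (∑ j ∈ s, v j) < d := by
  simp only [poleOrder_lt_iff hh hf, ← mem_degreeLT] at hv ⊢
  constructor
  · rw [show (∑ j ∈ s, v j).re = ∑ j ∈ s, (v j).re from map_sum (QuadraticAlgebra.reₗ f h) v s]
    exact Submodule.sum_mem _ fun j hj => (hv j hj).1
  · rw [show (∑ j ∈ s, v j).im = ∑ j ∈ s, (v j).im from map_sum (QuadraticAlgebra.imₗ f h) v s]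
    exact Submodule.sum_mem _ fun j hj => (hv j hj).2

theorem sum_ne_zero_of_poleOrder_injective (hh : h.natDegree ≤ g) (hf : f.natDegree = 2 * g + 1)
    {J : Type*} [Fintype J] {v : J → QuadraticAlgebra K[X] f h} (hne : ∃ j, v j ≠ 0)
    (hinj : ∀ i j, v i ≠ 0 → v j ≠ 0 → poleOrder (v i) = poleOrder (v j) → i = j) :
    ∑ j, v j ≠ 0 := by
  classical
  obtain ⟨i, hi⟩ := hne
  obtain ⟨j, -, hj⟩ := Finset.exists_max_image Finset.univ (fun j => poleOrder (v j)) ⟨i, by simp⟩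
  have hvj : v j ≠ 0 := fun hvj => hi <| (poleOrder_eq_bot_iff hh hf).mp <| le_bot_iff.mp <|
    (hj i (Finset.mem_univ i)).trans_eq <| (poleOrder_eq_bot_iff hh hf).mpr hvj
  obtain ⟨d, hd⟩ := WithBot.ne_bot_iff_exists.mp (mt (poleOrder_eq_bot_iff hh hf).mp hvj)
  have hrest : poleOrder (∑ i ∈ Finset.univ.erase j, v i) < d := by
    refine poleOrder_sum_lt hh hf fun i hij =>
      lt_of_le_of_ne ((hj i (Finset.mem_univ i)).trans_eq hd.symm) ?_
    intro hid
    have hvi : v i ≠ 0 := by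
      rw [Ne, ← poleOrder_eq_bot_iff hh hf, hid]
      exact WithBot.coe_ne_bot
    exact (Finset.ne_of_mem_erase hij) (hinj i j hvi hvj (hid.trans hd))
  intro hsum
  rw [← Finset.add_sum_erase _ _ (Finset.mem_univ j), add_eq_zero_iff_neg_eq] at hsum
  rw [← hsum, poleOrder_neg] at hrest
  exact hrest.ne hd.symm

end PoleOrder

section AffinePoints

open Polynomial

variable {K : Type*} [Field K]

/-- Evaluation of a function `a + b t` on the curve `t² = f + h t` at an affine point. -/
def evalPoint {f h : K[X]} {x t : K} (hp : t ^ 2 = f.eval x + h.eval x * t) :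
    QuadraticAlgebra K[X] f h →+* K where
  toFun z := z.re.eval x + z.im.eval x * t
  map_one' := by simp [QuadraticAlgebra.re_one, QuadraticAlgebra.im_one]
  map_mul' z w := by
    simp only [QuadraticAlgebra.re_mul, QuadraticAlgebra.im_mul, eval_add, eval_mul]
    linear_combination -(z.im.eval x * w.im.eval x) * hp
  map_zero' := by simp
  map_add' z w := by
    simp only [QuadraticAlgebra.re_add, QuadraticAlgebra.im_add, eval_add]
    ring

variable [Fintype K] [DecidableEq K]

/-- The affine points of the curve `t² = f + h t` over a finite field. -/
def affinePoints (f h : K[X]) : Finset (K × K) :=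
  {p | p.2 ^ 2 = f.eval p.1 + h.eval p.1 * p.2}

lemma mem_affinePoints {f h : K[X]} {p : K × K} :
    p ∈ affinePoints f h ↔ p.2 ^ 2 = f.eval p.1 + h.eval p.1 * p.2 := by
  simp [affinePoints]

lemma card_sq_eq_add_mul_le_two (a b : K) : Finset.card {t : K | t ^ 2 = a + b * t} ≤ 2 := by
  have hdeg : (X ^ 2 - (C b * X + C a) : K[X]).natDegree = 2 := by compute_degree!
  have hsub : ({t : K | t ^ 2 = a + b * t} : Finset K) ⊆
      (X ^ 2 - (C b * X + C a) : K[X]).roots.toFinset := by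
    intro t ht
    rw [Multiset.mem_toFinset, mem_roots (ne_zero_of_natDegree_gt (hdeg ▸ two_pos))]
    simp only [Finset.mem_filter, Finset.mem_univ, true_and] at ht
    simp [ht, add_comm]
  exact (Finset.card_le_card hsub).trans ((Multiset.toFinset_card_le _).trans
    ((card_roots' _).trans_eq hdeg))

/-- If `z` vanishes at the point `(x, t)` with `b x = 0`, then `a x = 0` as well, and `x` is a
double root of the norm; otherwise `z` has a single zero over `x`. -/
lemma card_zeros_fiber_le_rootMultiplicity_norm {f h : K[X]} {z : QuadraticAlgebra K[X] f h}
    (hz : QuadraticAlgebra.norm z ≠ 0) (x : K) :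
    Finset.card {t : K | t ^ 2 = f.eval x + h.eval x * t ∧ z.re.eval x + z.im.eval x * t = 0} ≤
      (QuadraticAlgebra.norm z).rootMultiplicity x := by
  set Z : Finset K := {t | t ^ 2 = f.eval x + h.eval x * t ∧ z.re.eval x + z.im.eval x * t = 0}
    with hZ
  rcases Z.eq_empty_or_nonempty with hempty | ⟨t, ht⟩
  · simp [hempty]
  obtain ⟨hcurve, hzero⟩ : _ ∧ _ := by simpa [hZ] using ht
  by_cases hb : z.im.eval x = 0
  · have hle : Z.card ≤ 2 :=
      (Finset.card_le_card fun s hs => by simp_all).trans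
        (card_sq_eq_add_mul_le_two (f.eval x) (h.eval x))
    refine hle.trans ((le_rootMultiplicity_iff hz).mpr ?_)
    obtain ⟨a, ha⟩ := dvd_iff_isRoot.mpr (show z.re.IsRoot x by simpa [hb] using hzero)
    obtain ⟨b, hb⟩ := dvd_iff_isRoot.mpr hb
    exact ⟨a ^ 2 + h * a * b - f * b ^ 2, by rw [QuadraticAlgebra.norm_def, ha, hb]; ring⟩
  · have hle : Z.card ≤ 1 := Finset.card_le_one.mpr fun s hs s' hs' => by
      simp only [hZ, Finset.mem_filter, Finset.mem_univ, true_and] at hs hs'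
      exact mul_left_cancel₀ hb (add_left_cancel (hs.2.trans hs'.2.symm))
    refine hle.trans ((rootMultiplicity_pos hz).mpr ?_)
    simp only [IsRoot, QuadraticAlgebra.norm_def, eval_add, eval_sub, eval_mul]
    linear_combination (z.re.eval x + z.im.eval x * (h.eval x - t)) * hzero +
      (z.im.eval x) ^ 2 * hcurve

theorem card_zeros_le_natDegree_norm {f h : K[X]} {z : QuadraticAlgebra K[X] f h}
    (hz : QuadraticAlgebra.norm z ≠ 0) :
    Finset.card {p ∈ affinePoints f h | z.re.eval p.1 + z.im.eval p.1 * p.2 = 0} ≤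
      (QuadraticAlgebra.norm z).natDegree := by
  calc Finset.card {p ∈ affinePoints f h | z.re.eval p.1 + z.im.eval p.1 * p.2 = 0}
      = ∑ x, Finset.card {t : K |
          t ^ 2 = f.eval x + h.eval x * t ∧ z.re.eval x + z.im.eval x * t = 0} := by
        rw [← Finset.card_sigma]
        exact Finset.card_equiv (Equiv.sigmaEquivProd K K).symm fun p => by simp [mem_affinePoints]
    _ ≤ ∑ x, (QuadraticAlgebra.norm z).roots.count x :=
        Finset.sum_le_sum fun x _ =>
          (card_zeros_fiber_le_rootMultiplicity_norm hz x).trans_eq (count_roots _).symm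
    _ = (QuadraticAlgebra.norm z).roots.card :=
        Multiset.sum_count_eq_card fun x _ => Finset.mem_univ x
    _ ≤ (QuadraticAlgebra.norm z).natDegree := card_roots' _

end AffinePoints

section Stepanov

open Polynomial

variable {K : Type*} [Field K] {f h : K[X]} {g : ℕ}

lemma natCard_poleOrder_lt [Finite K] (hh : h.natDegree ≤ g) (hf : f.natDegree = 2 * g + 1)
    {d : ℕ} (hd : 2 * g ≤ d) :
    Nat.card {z : QuadraticAlgebra K[X] f h // poleOrder z < d} = Nat.card K ^ (d - g) := by
  have hdegreeLT (n : ℕ) : Nat.card (degreeLT K n) = Nat.card K ^ n := by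
    simp [Nat.card_congr (degreeLTEquiv K n).toEquiv, Nat.card_fun]
  let e : {z : QuadraticAlgebra K[X] f h // poleOrder z < d} ≃
      degreeLT K ((d + 1) / 2) × degreeLT K ((d - 2 * g) / 2) :=
    ((QuadraticAlgebra.equivProd f h).subtypeEquiv fun z => by
      rw [poleOrder_lt_iff hh hf, ← mem_degreeLT, ← mem_degreeLT]
      rfl).trans Equiv.subtypeProdEquivProd
  rw [Nat.card_congr e, Nat.card_prod, hdegreeLT, hdegreeLT, ← pow_add]
  congr 1
  omega

/-- The numbers `i + min i g` are `0, 2, …, 2 g` and everything beyond: the Weierstrass semigroup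
generated by `2` and `2 g + 1`. -/
lemma exists_poleOrder_eq (hh : h.natDegree ≤ g) (hf : f.natDegree = 2 * g + 1) (i : ℕ) :
    ∃ z : QuadraticAlgebra K[X] f h, poleOrder z = (i + min i g : ℕ) := by
  have hf0 : f ≠ 0 := by rintro rfl; simp at hf
  rcases Nat.even_or_odd' (i + min i g) with ⟨k, hk | hk⟩
  · exact ⟨⟨X ^ k, 0⟩, by simp [poleOrder_eq_max hh hf, hk]⟩
  · refine ⟨⟨0, X ^ (k - g)⟩, ?_⟩
    have : 2 * g + 1 + 2 * (k - g) = 2 * k + 1 := by omega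
    simp [poleOrder_eq_max hh hf, hk, degree_eq_natDegree hf0, hf, ← this]

lemma exists_natCast_eq_poleOrder (hh : h.natDegree ≤ g) (hf : f.natDegree = 2 * g + 1)
    {z : QuadraticAlgebra K[X] f h} (hz : z ≠ 0) : ∃ k : ℕ, poleOrder z = k :=
  (WithBot.ne_bot_iff_exists.mp (mt (poleOrder_eq_bot_iff hh hf).mp hz)).imp fun _ hk => hk.symm

lemma poleOrder_pow_mul_lt (hh : h.natDegree ≤ g) (hf : f.natDegree = 2 * g + 1) {a b n : ℕ}
    {z w : QuadraticAlgebra K[X] f h} (hz : poleOrder z < (a + 1 : ℕ)) (hw : poleOrder w < b) :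
    poleOrder (z ^ n * w) < (n * a + b : ℕ) := by
  by_cases h0 : z ^ n * w = 0
  · rw [(poleOrder_eq_bot_iff hh hf).mpr h0]
    exact WithBot.bot_lt_coe _
  obtain ⟨i, hi⟩ := exists_natCast_eq_poleOrder hh hf (right_ne_zero_of_mul h0)
  rw [poleOrder_mul, poleOrder_pow]
  rcases n.eq_zero_or_pos with rfl | hn
  · simpa using hw
  obtain ⟨k, hk⟩ := exists_natCast_eq_poleOrder hh hf
    (ne_zero_pow hn.ne' (left_ne_zero_of_mul h0))
  rw [hk, Nat.cast_lt] at hz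
  rw [hi, Nat.cast_lt] at hw
  rw [hk, hi, nsmul_eq_mul, ← Nat.cast_mul, ← Nat.cast_add, Nat.cast_lt]
  exact add_lt_add_of_le_of_lt (Nat.mul_le_mul_left n (Nat.le_of_lt_succ hz)) hw

variable {p r : ℕ} [Fact p.Prime] [CharP K p]

/-- There are `|K| ^ ((R - g) * (R + g + 1))` choices of coefficients `u`, where `R = p ^ r`, and
the sums lie in a space with `|K| ^ (R ^ 2 + g + 1)` elements. -/
lemma exists_sum_pow_mul_eq_zero [Finite K] (hh : h.natDegree ≤ g) (hf : f.natDegree = 2 * g + 1)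
    (hR : (g + 1) ^ 2 < p ^ r) {s : ℕ → QuadraticAlgebra K[X] f h}
    (hs : ∀ i, poleOrder (s i) = (i + min i g : ℕ)) :
    ∃ u : Fin (p ^ r + g + 1) → QuadraticAlgebra K[X] f h,
      u ≠ 0 ∧ (∀ j, poleOrder (u j) < (p ^ r : ℕ)) ∧ ∑ j, u j ^ p ^ r * s j = 0 := by
  have : CharP (QuadraticAlgebra K[X] f h) p :=
    charP_of_injective_algebraMap (algebraMap K _).injective p
  have hfrob (z w : QuadraticAlgebra K[X] f h) := sub_pow_char_pow (p := p) z w r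
  generalize p ^ r = R at *
  obtain ⟨k, hk⟩ := Nat.exists_eq_add_of_le (show g + 1 ≤ R by nlinarith)
  let U := {z : QuadraticAlgebra K[X] f h // poleOrder z < R}
  let V := {z : QuadraticAlgebra K[X] f h // poleOrder z < (R ^ 2 + 2 * g + 1 : ℕ)}
  have hcardV : Nat.card V = Nat.card K ^ (R ^ 2 + g + 1) := by
    rw [natCard_poleOrder_lt hh hf (by omega)]
    congr 1
    omega
  let Θ (u : Fin (R + g + 1) → U) : V := ⟨∑ j, (u j).1 ^ R * s j, by
    refine poleOrder_sum_lt hh hf fun j _ => ?_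
    have hj : poleOrder (s j) < (R + 2 * g + 1 : ℕ) := by
      rw [hs, Nat.cast_lt]
      omega
    have hu : poleOrder (u j).1 < (R - 1 + 1 : ℕ) := by
      rw [Nat.sub_add_cancel (by omega)]
      exact (u j).2
    convert! poleOrder_pow_mul_lt (n := R) hh hf hu hj using 2
    rw [hk, show g + 1 + k - 1 = g + k by omega]
    ring⟩
  have hcard : Nat.card V < Nat.card (Fin (R + g + 1) → U) := by
    rw [hcardV, Nat.card_fun, Nat.card_fin, natCard_poleOrder_lt hh hf (by nlinarith), ← pow_mul,
      show R - g = k + 1 by omega, hk]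
    refine Nat.pow_lt_pow_right Finite.one_lt_card ?_
    rw [hk] at hR
    linarith
  have : Finite V := Nat.finite_of_card_ne_zero (hcardV ▸ (pow_pos Nat.card_pos _).ne')
  obtain ⟨u, v, hΘ, huv⟩ := Function.not_injective_iff.mp fun hinj =>
    hcard.not_ge (Nat.card_le_card_of_injective Θ hinj)
  refine ⟨fun j => (u j).1 - (v j).1, fun h0 => huv (funext fun j => ?_),
    fun j => poleOrder_sub_lt hh hf (u j).2 (v j).2, ?_⟩
  · exact Subtype.ext (sub_eq_zero.mp (congrFun h0 j))
  · simp only [hfrob, sub_mul, Finset.sum_sub_distrib]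
    exact sub_eq_zero.mpr (congrArg Subtype.val hΘ)

/-- At rational points the `R`-th power of `∑ u * s ^ R`, with `R = p ^ r`, takes the same values
as `∑ u ^ R * s`. -/
lemma evalPoint_sum_mul_pow_eq_zero [Finite K] (hK : Nat.card K = (p ^ r) ^ 2) {J : Type*}
    [Fintype J] {u s : J → QuadraticAlgebra K[X] f h} (hus : ∑ j, u j ^ p ^ r * s j = 0) {x t : K}
    (hp : t ^ 2 = f.eval x + h.eval x * t) : evalPoint hp (∑ j, u j * s j ^ p ^ r) = 0 := by
  have := Fintype.ofFinite K
  have hfrob (y : K) : (y ^ p ^ r) ^ p ^ r = y := by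
    rw [← pow_mul, ← sq, ← hK, Nat.card_eq_fintype_card, FiniteField.pow_card]
  refine pow_eq_zero_iff (pow_ne_zero r (Fact.out : p.Prime).ne_zero) |>.mp ?_
  calc evalPoint hp (∑ j, u j * s j ^ p ^ r) ^ p ^ r
      = ∑ j, evalPoint hp (u j) ^ p ^ r * evalPoint hp (s j) := by
        simp [sum_pow_char_pow, mul_pow, hfrob]
    _ = evalPoint hp (∑ j, u j ^ p ^ r * s j) := by simp
    _ = 0 := by rw [hus, map_zero]

/-- The pole orders of the summands `u j * s j ^ R` are distinct because
`poleOrder (u j) < R`. -/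
lemma sum_mul_pow_ne_zero (hh : h.natDegree ≤ g) (hf : f.natDegree = 2 * g + 1) {R : ℕ}
    {J : Type*} [Fintype J] {u s : J → QuadraticAlgebra K[X] f h} {ν : J → ℕ} (hu : u ≠ 0)
    (huR : ∀ j, poleOrder (u j) < R) (hs : ∀ j, poleOrder (s j) = ν j)
    (hν : Function.Injective ν) : ∑ j, u j * s j ^ R ≠ 0 := by
  have horder (j : J) (hj : u j ≠ 0) :
      ∃ k < R, poleOrder (u j * s j ^ R) = (k + R * ν j : ℕ) := by
    obtain ⟨k, hk⟩ := exists_natCast_eq_poleOrder hh hf hj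
    refine ⟨k, by simpa [hk] using huR j, ?_⟩
    rw [poleOrder_mul, poleOrder_pow, hs, hk, nsmul_eq_mul, ← Nat.cast_mul, ← Nat.cast_add]
  refine sum_ne_zero_of_poleOrder_injective hh hf ?_ fun i j hi hj hij => hν ?_
  · obtain ⟨j, hj⟩ := Function.ne_iff.mp hu
    obtain ⟨k, -, hk⟩ := horder j hj
    refine ⟨j, fun h0 => ?_⟩
    rw [(poleOrder_eq_bot_iff hh hf).mpr h0] at hk
    exact WithBot.bot_ne_coe hk
  · obtain ⟨k, hkR, hk⟩ := horder i (left_ne_zero_of_mul hi)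
    obtain ⟨l, hlR, hl⟩ := horder j (left_ne_zero_of_mul hj)
    rw [hk, hl, Nat.cast_inj] at hij
    simpa [Nat.add_mul_div_left _ _ (Nat.zero_lt_of_lt hkR), Nat.div_eq_of_lt, hkR, hlR] using
      congrArg (· / R) hij

theorem card_affinePoints_lt [Fintype K] [DecidableEq K] (hK : Nat.card K = (p ^ r) ^ 2)
    (hh : h.natDegree ≤ g) (hf : f.natDegree = 2 * g + 1) (hR : (g + 1) ^ 2 < p ^ r) :
    (affinePoints f h).card < (p ^ r) ^ 2 + (2 * g + 1) * p ^ r := by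
  choose s hs using exists_poleOrder_eq (K := K) hh hf
  obtain ⟨u, hu, huR, hsum⟩ := exists_sum_pow_mul_eq_zero hh hf hR hs
  set Ψ := ∑ j, u j * s j ^ p ^ r
  have hΨ : Ψ ≠ 0 := sum_mul_pow_ne_zero hh hf hu huR (fun j => hs j) fun i j hij => by lia
  have hnorm : QuadraticAlgebra.norm Ψ ≠ 0 := by
    rwa [Ne, ← degree_eq_bot, ← poleOrder, poleOrder_eq_bot_iff hh hf]
  have horder : poleOrder Ψ < ((p ^ r) ^ 2 + (2 * g + 1) * p ^ r : ℕ) := by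
    refine poleOrder_sum_lt hh hf fun j _ => ?_
    have hj : poleOrder (s j) < (p ^ r + 2 * g + 1 : ℕ) := by
      rw [hs, Nat.cast_lt]
      omega
    convert! poleOrder_pow_mul_lt (n := p ^ r) hh hf hj (huR j) using 2
    · rw [mul_comm]
    · ring
  calc (affinePoints f h).card
      = Finset.card {q ∈ affinePoints f h | Ψ.re.eval q.1 + Ψ.im.eval q.1 * q.2 = 0} := by
        rw [Finset.filter_true_of_mem]
        exact fun q hq => evalPoint_sum_mul_pow_eq_zero hK hsum (mem_affinePoints.mp hq)
    _ ≤ (QuadraticAlgebra.norm Ψ).natDegree := card_zeros_le_natDegree_norm hnorm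
    _ < (p ^ r) ^ 2 + (2 * g + 1) * p ^ r := by
        rwa [poleOrder, degree_eq_natDegree hnorm, Nat.cast_lt] at horder

end Stepanov

section ArtinSchreier

open Polynomial

variable {K : Type*} [Field K] [CharP K 2]

/-- The Artin–Schreier map in characteristic two. -/
def artinSchreier (K : Type*) [Field K] [CharP K 2] : K →+ K where
  toFun t := t ^ 2 + t
  map_zero' := by simp
  map_add' s t := by rw [CharTwo.add_sq]; ring

lemma artinSchreier_apply (t : K) : artinSchreier K t = t ^ 2 + t := rfl

lemma artinSchreier_add_one (t : K) : artinSchreier K (t + 1) = artinSchreier K t := by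
  simp only [artinSchreier_apply]
  linear_combination (t + 1) * CharTwo.two_eq_zero (R := K)

lemma artinSchreier_eq_zero_iff {t : K} : artinSchreier K t = 0 ↔ t = 0 ∨ t = 1 := by
  rw [artinSchreier_apply, show t ^ 2 + t = t * (t + 1) by ring, mul_eq_zero, CharTwo.add_eq_zero]

lemma index_range_artinSchreier [Finite K] : (artinSchreier K).range.index = 2 := by
  have hker : ((artinSchreier K).ker : Set K) = {0, 1} := by
    ext t
    simp [artinSchreier_eq_zero_iff]
  rw [AddSubgroup.index_range, ← Set.ncard_pair (zero_ne_one (α := K)), ← hker]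
  rfl

variable {ψ : AddChar K ℝ}

lemma addChar_artinSchreier (hψ2 : ∀ t, ψ (t ^ 2) = ψ t) (t : K) : ψ (artinSchreier K t) = 1 := by
  rw [artinSchreier_apply, AddChar.map_add_eq_mul, hψ2, ← AddChar.map_add_eq_mul,
    CharTwo.add_self_eq_zero, AddChar.map_zero_eq_one]

lemma exists_addChar_eq_neg_one (hψ : ψ ≠ 1) : ∃ e, ψ e = -1 := by
  obtain ⟨e, he⟩ := AddChar.ne_one_iff.mp hψ
  refine ⟨e, (mul_self_eq_one_iff.mp ?_).resolve_left he⟩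
  rw [← AddChar.map_add_eq_mul, CharTwo.add_self_eq_zero, AddChar.map_zero_eq_one]

lemma one_add_le_card_artinSchreier_eq [Fintype K] [DecidableEq K] (hψ : ψ ≠ 1)
    (hψ2 : ∀ t, ψ (t ^ 2) = ψ t) (w : K) :
    1 + ψ w ≤ Finset.card {t : K | artinSchreier K t = w} := by
  by_cases hw : w ∈ (artinSchreier K).range
  · obtain ⟨t, rfl⟩ := hw
    have hpair :
        ({t, t + 1} : Finset K) ⊆ ({s | artinSchreier K s = artinSchreier K t} : Finset K) :=
      Finset.insert_subset (by simp) (by simp [artinSchreier_add_one])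
    have hcard := Finset.card_le_card hpair
    rw [Finset.card_pair (by simp)] at hcard
    rw [addChar_artinSchreier hψ2, one_add_one_eq_two]
    exact_mod_cast hcard
  · obtain ⟨e, he⟩ := exists_addChar_eq_neg_one hψ
    have hrange (v : K) (hv : v ∈ (artinSchreier K).range) : ψ v = 1 := by
      obtain ⟨t, rfl⟩ := hv
      exact addChar_artinSchreier hψ2 t
    have hwe : w + e ∈ (artinSchreier K).range :=
      (AddSubgroup.add_mem_iff_of_index_two index_range_artinSchreier).mpr
        (iff_of_false hw fun he' => by linarith [hrange e he'])
    have : ψ w * -1 = 1 := by rw [← he, ← AddChar.map_add_eq_mul, hrange _ hwe]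
    have : 1 + ψ w = 0 := by linarith
    simp [this]

variable [Fintype K] [DecidableEq K] {r g : ℕ} {h u : K[X]}

/-- Substituting `t = h(x) s` turns the fibre `s² + s = u / h + e` into the fibre over `x` of the
curve `t² = (u h + e h²) + h t`, which has one point at infinity. -/
lemma sum_one_add_addChar_div_le (hψ : ψ ≠ 1) (hψ2 : ∀ t, ψ (t ^ 2) = ψ t)
    (hK : Nat.card K = (2 ^ r) ^ 2) (hh : h.natDegree = g) (hh0 : h ≠ 0)
    (hu : u.natDegree = g + 1) (hR : (g + 1) ^ 2 < 2 ^ r) (e : K) :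
    ∑ x with h.eval x ≠ 0, (1 + ψ (u.eval x / h.eval x + e)) ≤
      (2 ^ r) ^ 2 + (2 * g + 1) * 2 ^ r := by
  have hu0 : u ≠ 0 := by rintro rfl; simp at hu
  have hf : (u * h + C e * h ^ 2).natDegree = 2 * g + 1 := by
    have huh : (u * h).natDegree = 2 * g + 1 := by rw [natDegree_mul hu0 hh0, hu, hh]; ring
    rw [natDegree_add_eq_left_of_natDegree_lt, huh]
    rw [huh]
    refine (natDegree_C_mul_le _ _).trans_lt ?_
    rw [natDegree_pow, hh]
    omega
  have hfiber (x : K) (hx : h.eval x ≠ 0) :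
      Finset.card {s : K | artinSchreier K s = u.eval x / h.eval x + e} ≤
        Finset.card {p ∈ affinePoints (u * h + C e * h ^ 2) h | p.1 = x} := by
    refine Finset.card_le_card_of_injOn (fun s => (x, h.eval x * s)) (fun s hs => ?_) ?_
    · have hs : s ^ 2 + s = u.eval x / h.eval x + e := (Finset.mem_filter.mp hs).2
      simp only [Finset.coe_filter, Set.mem_ofPred_eq, mem_affinePoints, and_true, eval_add,
        eval_mul, eval_C, eval_pow]
      field_simp at hs
      linear_combination h.eval x * hs - h.eval x ^ 2 * s * CharTwo.two_eq_zero (R := K)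
    · intro s _ s' _ hss
      exact mul_left_cancel₀ hx (Prod.ext_iff.mp hss).2
  calc ∑ x with h.eval x ≠ 0, (1 + ψ (u.eval x / h.eval x + e))
      ≤ ∑ x with h.eval x ≠ 0,
          (Finset.card {p ∈ affinePoints (u * h + C e * h ^ 2) h | p.1 = x} : ℝ) :=
        Finset.sum_le_sum fun x hx => (one_add_le_card_artinSchreier_eq hψ hψ2 _).trans
          (by exact_mod_cast hfiber x (Finset.mem_filter.mp hx).2)
    _ ≤ ∑ x, (Finset.card {p ∈ affinePoints (u * h + C e * h ^ 2) h | p.1 = x} : ℝ) :=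
        Finset.sum_le_univ_sum_of_nonneg fun _ => Nat.cast_nonneg _
    _ = (affinePoints (u * h + C e * h ^ 2) h).card := by
        rw [← Nat.cast_sum, ← Finset.card_eq_sum_card_fiberwise fun _ _ => Finset.mem_univ _]
    _ ≤ (2 ^ r) ^ 2 + (2 * g + 1) * 2 ^ r := by
        exact_mod_cast (card_affinePoints_lt hK hh.le hf hR).le

/-- The upper bound is applied to the curve and to its quadratic twist by `e` with `ψ e = -1`. -/
theorem abs_sum_addChar_div_le (hψ : ψ ≠ 1) (hψ2 : ∀ t, ψ (t ^ 2) = ψ t)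
    (hK : Nat.card K = (2 ^ r) ^ 2) (hh : h.natDegree = g) (hh0 : h ≠ 0)
    (hu : u.natDegree = g + 1) (hR : (g + 1) ^ 2 < 2 ^ r) :
    |∑ x with h.eval x ≠ 0, ψ (u.eval x / h.eval x)| ≤ g + (2 * g + 1) * 2 ^ r := by
  obtain ⟨e, he⟩ := exists_addChar_eq_neg_one hψ
  have hbound := sum_one_add_addChar_div_le hψ hψ2 hK hh hh0 hu hR 0
  have htwist := sum_one_add_addChar_div_le hψ hψ2 hK hh hh0 hu hR e
  simp only [Finset.sum_add_distrib, Finset.sum_const, nsmul_eq_mul, mul_one, add_zero,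
    AddChar.map_add_eq_mul, he, ← Finset.sum_mul] at hbound htwist
  have hcard : ((2 : ℝ) ^ r) ^ 2 ≤ g + (Finset.card {x | h.eval x ≠ 0} : ℝ) := by
    have hroots : Finset.card {x | h.eval x = 0} ≤ g := by
      refine hh ▸ (Finset.card_le_card fun x hx => ?_).trans
        ((Multiset.toFinset_card_le _).trans (card_roots' h))
      simpa [hh0] using hx
    have := Finset.card_filter_add_card_filter_not (s := Finset.univ) (fun x : K => h.eval x = 0)
    rw [Finset.card_univ, ← Nat.card_eq_fintype_card, hK] at this
    exact_mod_cast this.symm.le.trans (Nat.add_le_add_right hroots _)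
  rw [abs_le]
  constructor <;> linarith

end ArtinSchreier

section NormFibers

open Polynomial

variable {F K : Type*} [Field F] [Field K] [Algebra F K]

lemma exists_isPrimitiveRoot_natCard_sub_one (F K : Type*) [Field F] [Finite F] [Field K]
    [Algebra F K] : ∃ ζ : K, IsPrimitiveRoot ζ (Nat.card F - 1) := by
  obtain ⟨γ, hγ⟩ := IsCyclic.exists_ofOrder_eq_natCard (α := Fˣ)
  rw [Nat.card_units] at hγ
  exact ⟨_, (IsPrimitiveRoot.coe_units_iff.mpr (hγ ▸ IsPrimitiveRoot.orderOf γ)).map_of_injective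
    (algebraMap F K).injective⟩

lemma natCard_sub_one_dvd (F K : Type*) [Field F] [Field K] [Algebra F K] [Finite K] :
    Nat.card F - 1 ∣ Nat.card K - 1 := by
  rw [Module.natCard_eq_pow_finrank (K := F) (V := K)]
  simpa using Nat.sub_dvd_pow_sub_pow (Nat.card F) 1 (Module.finrank F K)

variable [Finite F]

section

variable [Finite K]

lemma norm_pow_natCard_sub_one {y : K} (hy : y ≠ 0) :
    Algebra.norm F (y ^ (Nat.card F - 1)) = 1 := by
  have := Fintype.ofFinite F
  rw [map_pow, Nat.card_eq_fintype_card]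
  exact FiniteField.pow_card_sub_one_eq_one _ (Algebra.norm_ne_zero_iff.mpr hy)

/-- The inclusion `≤` is Hilbert's Theorem 90 for the Frobenius automorphism; here it follows by
comparing indices in the cyclic group `Kˣ`. -/
lemma ker_norm_eq_range_pow :
    (Units.map (Algebra.norm F (S := K))).ker = (powMonoidHom (Nat.card F - 1)).range := by
  refine (Subgroup.eq_of_le_of_card_ge ?_ (Nat.le_of_mul_le_mul_right
    (c := Nat.card F - 1) (le_of_eq ?_) (Nat.sub_pos_of_lt Finite.one_lt_card))).symm
  · rintro _ ⟨y, rfl⟩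
    exact Units.ext (norm_pow_natCard_sub_one y.ne_zero)
  · have hker := Subgroup.card_mul_index (Units.map (Algebra.norm F (S := K))).ker
    rw [Subgroup.index_ker, MonoidHom.range_eq_top.mpr (FiniteField.unitsMap_norm_surjective F K),
      Subgroup.card_top, Nat.card_units] at hker
    have hrange := Subgroup.card_mul_index (powMonoidHom (Nat.card F - 1) : Kˣ →* Kˣ).range
    rw [IsCyclic.index_powMonoidHom_range, Nat.gcd_eq_right
      (Nat.card_units K ▸ natCard_sub_one_dvd F K)] at hrange
    rw [hker, hrange]

lemma exists_pow_natCard_sub_one_eq {v : K} (hv : Algebra.norm F v = 1) :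
    ∃ y : K, y ^ (Nat.card F - 1) = v := by
  have hv0 : v ≠ 0 := Algebra.norm_ne_zero_iff.mp (hv ▸ one_ne_zero)
  have hmem : Units.mk0 v hv0 ∈ (Units.map (Algebra.norm F (S := K))).ker := Units.ext hv
  rw [ker_norm_eq_range_pow] at hmem
  obtain ⟨y, hy⟩ := hmem
  exact ⟨y, congrArg Units.val hy⟩

end

lemma card_pow_natCard_sub_one_eq [Fintype K] [DecidableEq K] {v : K}
    (hv : Algebra.norm F v = 1) :
    Finset.card {y : K | y ^ (Nat.card F - 1) = v} = Nat.card F - 1 := by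
  obtain ⟨ζ, hζ⟩ := exists_isPrimitiveRoot_natCard_sub_one F K
  have hv0 : v ≠ 0 := Algebra.norm_ne_zero_iff.mp (hv ▸ one_ne_zero)
  have hroots : ({y : K | y ^ (Nat.card F - 1) = v} : Finset K) =
      (nthRoots (Nat.card F - 1) v).toFinset := by
    ext y
    simp [mem_nthRoots (Nat.sub_pos_of_lt (Finite.one_lt_card (α := F)))]
  rw [hroots, Multiset.toFinset_card_of_nodup (hζ.nthRoots_nodup hv0), hζ.card_nthRoots,
    if_pos (exists_pow_natCard_sub_one_eq hv)]

/-- The denominator in the parametrisation `normParam` of the solutions of `N z = N (z + 1)`,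
where `q` is the size of the base field. -/
def normDenom (K : Type*) [Field K] (q : ℕ) : K[X] :=
  X ^ (q - 1) + (X + 1) ^ (q - 1)

lemma eval_normDenom (q : ℕ) (x : K) :
    (normDenom K q).eval x = x ^ (q - 1) + (x + 1) ^ (q - 1) := by
  simp [normDenom]

/-- The map `x ↦ (x + 1) ^ (q - 1) / (x ^ (q - 1) + (x + 1) ^ (q - 1))`. In characteristic two, by
Hilbert's Theorem 90, it parametrises the solutions of `N z = N (z + 1)`. -/
def normParam (q : ℕ) (x : K) : K :=
  (x + 1) ^ (q - 1) / (normDenom K q).eval x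

lemma normParam_zero {q : ℕ} (hq : q - 1 ≠ 0) : normParam q (0 : K) = 1 := by
  simp [normParam, eval_normDenom, hq]

variable [CharP K 2]

lemma inv_add_one_add_one {y : K} (hy : y + 1 ≠ 0) : (y + 1)⁻¹ + 1 = y / (y + 1) := by
  field_simp
  linear_combination CharTwo.two_eq_zero (R := K)

lemma add_one_div_add_one {x : K} (hx : x ≠ 0) : (x + 1) / x + 1 = x⁻¹ := by
  field_simp
  linear_combination x * CharTwo.two_eq_zero (R := K)

lemma X_mul_X_add_one_mul_normDenom (m : ℕ) :
    X * (X + 1) * normDenom K (2 ^ m) = X ^ 2 ^ m + X := by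
  have hX : X * X ^ (2 ^ m - 1) = (X ^ 2 ^ m : K[X]) := mul_pow_sub_one (by simp) _
  have hX1 : (X + 1) * (X + 1) ^ (2 ^ m - 1) = (X ^ 2 ^ m + 1 : K[X]) := by
    rw [mul_pow_sub_one (by simp), add_pow_char_pow, one_pow]
  rw [normDenom]
  linear_combination (X + 1) * hX + X * hX1 + X ^ (2 ^ m + 1) * CharTwo.two_eq_zero (R := K[X])

lemma natDegree_normDenom {m : ℕ} (hm : m ≠ 0) :
    (normDenom K (2 ^ m)).natDegree = 2 ^ m - 2 ∧ normDenom K (2 ^ m) ≠ 0 := by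
  have hdeg : (X ^ 2 ^ m + X : K[X]).natDegree = 2 ^ m := by
    rw [natDegree_add_eq_left_of_natDegree_lt] <;> simp [hm]
  rw [← X_mul_X_add_one_mul_normDenom] at hdeg
  have h0 : normDenom K (2 ^ m) ≠ 0 := by
    intro h
    rw [h, mul_zero, natDegree_zero] at hdeg
    exact absurd hdeg (by positivity)
  have hX1 : (X + 1 : K[X]) ≠ 0 := X_add_C_ne_zero 1
  have hX1deg : (X + 1 : K[X]).natDegree = 1 := natDegree_X_add_C 1
  rw [natDegree_mul (mul_ne_zero X_ne_zero hX1) h0, natDegree_mul X_ne_zero hX1, natDegree_X,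
    hX1deg] at hdeg
  exact ⟨by omega, h0⟩

lemma normParam_one {q : ℕ} (hq : q - 1 ≠ 0) : normParam q (1 : K) = 0 := by
  simp [normParam, hq, CharTwo.add_self_eq_zero]

lemma normParam_add_one {q : ℕ} {x : K} (hx : (normDenom K q).eval x ≠ 0) :
    normParam q x + 1 = x ^ (q - 1) / (normDenom K q).eval x := by
  rw [normParam, div_add_one hx, eval_normDenom]
  congr 1
  linear_combination (x + 1) ^ (q - 1) * CharTwo.two_eq_zero (R := K)

lemma norm_normParam [Finite K] {x : K} (hx0 : x ≠ 0) (hx1 : x ≠ 1)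
    (hx : (normDenom K (Nat.card F)).eval x ≠ 0) :
    Algebra.norm F (normParam (Nat.card F) x) = Algebra.norm F (normParam (Nat.card F) x + 1) := by
  rw [normParam_add_one hx, normParam, div_eq_mul_inv, div_eq_mul_inv, map_mul, map_mul,
    norm_pow_natCard_sub_one hx0, norm_pow_natCard_sub_one (CharTwo.add_eq_zero.not.mpr hx1)]

omit [Finite F] in
lemma ne_zero_of_norm_eq_norm_add_one [Finite K] {z : K}
    (hz : Algebra.norm F z = Algebra.norm F (z + 1)) : z ≠ 0 ∧ z + 1 ≠ 0 := by
  constructor <;> intro h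
  · simp [h] at hz
  · simp [CharTwo.add_eq_zero.mp h, CharTwo.add_self_eq_zero] at hz

variable [Fintype K] [DecidableEq K]

/-- The fibre is carried by `y = (x + 1) / x` onto the solutions of `y ^ (q - 1) = z / (z + 1)`. -/
lemma card_normParam_eq {z : K} (hz : Algebra.norm F z = Algebra.norm F (z + 1)) :
    Finset.card {x : K | (normDenom K (Nat.card F)).eval x ≠ 0 ∧ normParam (Nat.card F) x = z} =
      Nat.card F - 1 := by
  obtain ⟨hz0, hz1⟩ := ne_zero_of_norm_eq_norm_add_one hz
  have hv : Algebra.norm F (z / (z + 1)) = 1 := by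
    rw [div_eq_mul_inv, map_mul, hz, ← map_mul, mul_inv_cancel₀ hz1, map_one]
  have hne {y : K} (hy : y ^ (Nat.card F - 1) = z / (z + 1)) : y + 1 ≠ 0 := by
    intro h
    rw [CharTwo.add_eq_zero.mp h, one_pow, eq_div_iff hz1] at hy
    simp at hy
  refine Eq.trans (Finset.card_nbij' (fun x => (x + 1) / x) (fun y => (y + 1)⁻¹) ?_ ?_ ?_ ?_)
    (card_pow_natCard_sub_one_eq hv)
  · intro x hxmem
    obtain ⟨hx, rfl⟩ := (Finset.mem_filter.mp hxmem).2
    refine Finset.mem_filter.mpr ⟨Finset.mem_univ _, ?_⟩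
    rw [normParam_add_one hx, normParam, div_pow, div_div_div_cancel_right₀ hx]
  · intro y hymem
    have hy : y ^ (Nat.card F - 1) = z / (z + 1) := (Finset.mem_filter.mp hymem).2
    have hy1 := hne hy
    have heval : (normDenom K (Nat.card F)).eval (y + 1)⁻¹ =
        1 / ((z + 1) * (y + 1) ^ (Nat.card F - 1)) := by
      rw [eval_normDenom, inv_add_one_add_one hy1, div_pow, inv_pow, hy]
      field_simp
      linear_combination z * CharTwo.two_eq_zero (R := K)
    refine Finset.mem_filter.mpr ⟨Finset.mem_univ _, ?_, ?_⟩
    · exact heval ▸ one_div_ne_zero (mul_ne_zero hz1 (pow_ne_zero _ hy1))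
    · rw [normParam, heval, inv_add_one_add_one hy1, div_pow, hy]
      field_simp
  · intro x hxmem
    obtain ⟨hx, rfl⟩ := (Finset.mem_filter.mp hxmem).2
    have hx0 : x ≠ 0 := by
      rintro rfl
      exact hz1 (by rw [normParam_zero (Nat.sub_pos_of_lt Finite.one_lt_card).ne',
        CharTwo.add_self_eq_zero])
    simp [add_one_div_add_one hx0]
  · intro y hymem
    have hy1 := hne (Finset.mem_filter.mp hymem).2
    simp [inv_add_one_add_one hy1, hy1]

lemma sum_normParam [DecidableEq F] {R : Type*} [Ring R] (s : K → R) :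
    ∑ x with (normDenom K (Nat.card F)).eval x ≠ 0, s (normParam (Nat.card F) x) =
      s 1 + (s 0 + ((Nat.card F - 1 : ℕ) : R) *
        ∑ z : K with Algebra.norm F z = Algebra.norm F (z + 1), s z) := by
  have hq : Nat.card F - 1 ≠ 0 := (Nat.sub_pos_of_lt Finite.one_lt_card).ne'
  set S : Finset K := {x | (normDenom K (Nat.card F)).eval x ≠ 0}
  have hmem {x : K} : x ∈ (S.erase 0).erase 1 ↔
      x ≠ 1 ∧ x ≠ 0 ∧ (normDenom K (Nat.card F)).eval x ≠ 0 := by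
    simp [S]
  have hmaps (x : K) (hx : x ∈ (S.erase 0).erase 1) : normParam (Nat.card F) x ∈
      ({z | Algebra.norm F z = Algebra.norm F (z + 1)} : Finset K) := by
    obtain ⟨hx1, hx0, hx⟩ := hmem.mp hx
    exact Finset.mem_filter.mpr ⟨Finset.mem_univ _, norm_normParam hx0 hx1 hx⟩
  rw [← Finset.add_sum_erase S _ (a := 0) (by simp [S, eval_normDenom, hq]), normParam_zero hq,
    ← Finset.add_sum_erase (S.erase 0) _ (a := 1)
      (by simp [S, eval_normDenom, hq, CharTwo.add_self_eq_zero]), normParam_one hq,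
    ← Finset.sum_fiberwise_of_maps_to hmaps, Finset.mul_sum]
  congr 2
  refine Finset.sum_congr rfl fun z hz => ?_
  have hz := (Finset.mem_filter.mp hz).2
  obtain ⟨hz0, hz1⟩ := ne_zero_of_norm_eq_norm_add_one hz
  have hfiber : {x ∈ (S.erase 0).erase 1 | normParam (Nat.card F) x = z} =
      ({x | (normDenom K (Nat.card F)).eval x ≠ 0 ∧ normParam (Nat.card F) x = z} : Finset K) := by
    ext x
    rw [Finset.mem_filter, hmem, Finset.mem_filter_univ]
    refine ⟨fun h => ⟨h.1.2.2, h.2⟩, fun h => ⟨⟨?_, ?_, h.1⟩, h.2⟩⟩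
    · rintro rfl
      exact hz0 (h.2.symm.trans (normParam_one hq))
    · rintro rfl
      exact hz1 (by rw [← h.2, normParam_zero hq, CharTwo.add_self_eq_zero])
  rw [Finset.sum_congr rfl fun x hx => by rw [(Finset.mem_filter.mp hx).2], Finset.sum_const,
    hfiber, card_normParam_eq hz, nsmul_eq_mul]

omit [DecidableEq K] in
theorem abs_sum_addChar_norm_eq_le [DecidableEq F] {ψ : AddChar K ℝ} (hψ : ψ ≠ 1)
    (hψ2 : ∀ t, ψ (t ^ 2) = ψ t) {m r : ℕ} (hm : m ≠ 0) (hF : Nat.card F = 2 ^ m)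
    (hK : Nat.card K = (2 ^ r) ^ 2) (hR : (2 ^ m) ^ 2 ≤ 2 ^ r) {c : K} (hc : c ≠ 0) :
    (2 ^ m - 1) * |∑ z : K with Algebra.norm F z = Algebra.norm F (z + 1), ψ (c * z)| ≤
      3 * 2 ^ m * 2 ^ r := by
  classical
  obtain ⟨k, hk⟩ : ∃ k, 2 ^ m = k + 2 := Nat.exists_eq_add_of_le' (Nat.le_self_pow hm 2)
  have hX1 : (X + 1 : K[X]).natDegree = 1 := natDegree_X_add_C 1
  obtain ⟨hdeg, h0⟩ := natDegree_normDenom (K := K) hm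
  rw [hk, Nat.add_sub_cancel] at hdeg
  have hdeg' : (C c * (X + 1) ^ (k + 1) : K[X]).natDegree = k + 1 := by
    rw [natDegree_C_mul hc, natDegree_pow, hX1, mul_one]
  have hmain := abs_sum_addChar_div_le hψ hψ2 hK hdeg (hk ▸ h0) hdeg'
    ((Nat.pow_lt_pow_left (by omega) two_ne_zero).trans_le hR)
  have hsum := sum_normParam (F := F) (fun z : K => ψ (c * z))
  simp only [hF, hk, normParam, show k + 2 - 1 = k + 1 from rfl] at hsum
  simp only [eval_mul, eval_C, eval_pow, eval_add, eval_X, eval_one, mul_div_assoc] at hmain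
  rw [hsum, mul_one, mul_zero, AddChar.map_zero_eq_one] at hmain
  set S := ∑ z : K with Algebra.norm F z = Algebra.norm F (z + 1), ψ (c * z)
  have hψc : |ψ c| = 1 := AddChar.norm_apply ψ c
  have hcast : (2 : ℝ) ^ m = k + 2 := by exact_mod_cast hk
  have hone : (1 : ℝ) ≤ 2 ^ r := one_le_pow₀ one_le_two
  have htri : |((k + 1 : ℕ) : ℝ) * S| ≤ |ψ c + (1 + (k + 1 : ℕ) * S)| + |ψ c| + |1| :=
    calc |((k + 1 : ℕ) : ℝ) * S| = |ψ c + (1 + (k + 1 : ℕ) * S) - ψ c - 1| := congrArg _ (by ring)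
      _ ≤ |ψ c + (1 + (k + 1 : ℕ) * S) - ψ c| + |1| := abs_sub _ _
      _ ≤ |ψ c + (1 + (k + 1 : ℕ) * S)| + |ψ c| + |1| := add_le_add_left (abs_sub _ _) _
  rw [abs_mul, Nat.abs_cast, hψc, abs_one] at htri
  push_cast at htri hmain
  rw [hcast]
  nlinarith

end NormFibers

section VonMangoldt

open Polynomial UniqueFactorizationMonoid

variable {F : Type*} [Field F]

open Classical in
/-- The von Mangoldt function of `F[X]`: `deg P` at the powers of an irreducible `P`, and `0`
elsewhere. -/
def polyVonMangoldt (Q : F[X]) : ℕ :=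
  if IsPrimePow Q then (radical Q).natDegree else 0

section

variable [DecidableEq F]

lemma radical_pow_of_irreducible_of_monic {P : F[X]} (hP : Irreducible P) (hm : P.Monic) {j : ℕ}
    (hj : j ≠ 0) : radical (P ^ j) = P := by
  rw [radical_pow_of_prime hP.prime hj, hm.normalize_eq_self]

omit [DecidableEq F] in
lemma exists_irreducible_monic_pow_eq {Q : F[X]} (hQ : IsPrimePow Q) (hm : Q.Monic) :
    ∃ (P : F[X]) (j : ℕ), Irreducible P ∧ P.Monic ∧ j ≠ 0 ∧ P ^ j = Q := by
  classical
  obtain ⟨P, j, hP, hj, rfl⟩ := hQ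
  refine ⟨normalize P, j, ((normalize_associated P).irreducible_iff).mpr hP.irreducible,
    monic_normalize hP.ne_zero, hj.ne', ?_⟩
  exact (map_pow (normalizeHom (α := F[X])) P j).symm.trans hm.normalize_eq_self

lemma irreducible_of_mem_primeFactors {f P : F[X]} (hP : P ∈ primeFactors f) : Irreducible P :=
  irreducible_of_normalized_factor P (mem_primeFactors.mp hP)

lemma monic_of_mem_primeFactors {f P : F[X]} (hP : P ∈ primeFactors f) : P.Monic :=
  normalize_normalized_factor P (mem_primeFactors.mp hP) ▸
    monic_normalize (irreducible_of_mem_primeFactors hP).ne_zero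

lemma pow_dvd_iff_le_count [DecidableEq F[X]] {f P : F[X]} (hf : f ≠ 0) (hP : Irreducible P)
    (hm : P.Monic) {j : ℕ} : P ^ j ∣ f ↔ j ≤ (normalizedFactors f).count P := by
  rw [pow_dvd_iff_le_emultiplicity, emultiplicity_eq_count_normalizedFactors hP hf,
    hm.normalize_eq_self, Nat.cast_le]

lemma sum_count_mul_natDegree [DecidableEq F[X]] {f : F[X]} (hf : f.Monic) :
    ∑ P ∈ primeFactors f, (normalizedFactors f).count P * P.natDegree = f.natDegree := by
  conv_rhs => rw [← hf.normalize_eq_self, ← prod_normalizedFactors_eq hf.ne_zero]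
  rw [natDegree_multiset_prod_of_monic _ fun P hP => monic_of_mem_primeFactors
    (mem_primeFactors.mpr hP), Finset.sum_multiset_map_count, toFinset_normalizedFactors]
  simp_rw [smul_eq_mul]

end

lemma polyVonMangoldt_pow {P : F[X]} (hP : Irreducible P) (hm : P.Monic) {j : ℕ}
    (hj : j ≠ 0) : polyVonMangoldt (P ^ j) = P.natDegree := by
  classical
  rw [polyVonMangoldt, if_pos (hP.prime.isPrimePow.pow hj),
    radical_pow_of_irreducible_of_monic hP hm hj]

theorem sum_polyVonMangoldt {f : F[X]} (hf : f.Monic) {s : Finset F[X]}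
    (hs : ∀ Q, Q ∈ s ↔ Q.Monic ∧ Q ∣ f) : ∑ Q ∈ s, polyVonMangoldt Q = f.natDegree := by
  classical
  rw [← sum_count_mul_natDegree hf]
  set e : (Σ _ : F[X], ℕ) → F[X] := fun x => x.1 ^ x.2
  set t := (primeFactors f).sigma fun P => Finset.Icc 1 ((normalizedFactors f).count P)
  have ht : ∀ x ∈ t, Irreducible x.1 ∧ x.1.Monic ∧ x.2 ≠ 0 := fun x hx => by
    obtain ⟨hP, hj⟩ := Finset.mem_sigma.mp hx
    exact ⟨irreducible_of_mem_primeFactors hP, monic_of_mem_primeFactors hP,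
      Nat.one_le_iff_ne_zero.mp (Finset.mem_Icc.mp hj).1⟩
  have hinj : Set.InjOn e t := by
    rintro ⟨P, i⟩ hx ⟨P', j⟩ hy (h : P ^ i = P' ^ j)
    obtain ⟨hP, hm, hi⟩ : Irreducible P ∧ P.Monic ∧ i ≠ 0 := ht _ hx
    obtain ⟨hP', hm', hj⟩ : Irreducible P' ∧ P'.Monic ∧ j ≠ 0 := ht _ hy
    obtain rfl : P = P' := by
      rw [← radical_pow_of_irreducible_of_monic hP hm hi, h,
        radical_pow_of_irreducible_of_monic hP' hm' hj]
    obtain rfl : i = j := Nat.eq_of_mul_eq_mul_right hP.natDegree_pos <| by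
      rw [← natDegree_pow, h, natDegree_pow]
    rfl
  have hmaps : Set.MapsTo e t s := by
    rintro ⟨P, j⟩ hx
    obtain ⟨hP, hm, -⟩ := ht _ hx
    exact (hs _).mpr ⟨hm.pow j, (pow_dvd_iff_le_count hf.ne_zero hP hm).mpr
      (Finset.mem_Icc.mp (Finset.mem_sigma.mp hx).2).2⟩
  have hrest : ∀ Q ∈ s, Q ∉ e '' t → polyVonMangoldt Q = 0 := by
    refine fun Q hQ hQt => if_neg fun hpp => hQt ?_
    obtain ⟨hQm, hQf⟩ := (hs Q).mp hQ
    obtain ⟨P, j, hP, hm, hj, rfl⟩ := exists_irreducible_monic_pow_eq hpp hQm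
    refine ⟨⟨P, j⟩, Finset.mem_sigma.mpr ⟨?_, Finset.mem_Icc.mpr
      ⟨Nat.one_le_iff_ne_zero.mpr hj, (pow_dvd_iff_le_count hf.ne_zero hP hm).mp hQf⟩⟩, rfl⟩
    rw [mem_primeFactors, mem_normalizedFactors_iff' hf.ne_zero]
    exact ⟨hP, hm.normalize_eq_self, (dvd_pow_self P hj).trans hQf⟩
  rw [← Finset.sum_of_injOn e hinj hmaps hrest fun x hx => (polyVonMangoldt_pow (ht x hx).1
    (ht x hx).2.1 (ht x hx).2.2).symm, Finset.sum_sigma]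
  simp

end VonMangoldt

section LSeries

open Polynomial
open Finset.HasAntidiagonal (antidiagonal)

variable (F : Type*) [Field F] [Finite F]

lemma finite_monic_natDegree_eq (k : ℕ) : {p : F[X] | p.Monic ∧ p.natDegree = k}.Finite :=
  have : Finite (degreeLT F k) := .of_equiv _ (degreeLTEquiv F k).toEquiv.symm
  Set.finite_coe_iff.mp (.of_equiv _ (monicEquivDegreeLT k).symm)

/-- The finite set of monic polynomials of degree `k` over a finite field. -/
def monicsOfDegree (k : ℕ) : Finset F[X] := (finite_monic_natDegree_eq F k).toFinset

variable {F}

lemma mem_monicsOfDegree {k : ℕ} {p : F[X]} :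
    p ∈ monicsOfDegree F k ↔ p.Monic ∧ p.natDegree = k :=
  (finite_monic_natDegree_eq F k).mem_toFinset

lemma monicsOfDegree_zero : monicsOfDegree F 0 = {1} := by
  ext p
  rw [mem_monicsOfDegree, Finset.mem_singleton]
  exact ⟨fun h => h.1.natDegree_eq_zero.mp h.2, by rintro rfl; simp⟩

variable {R : Type*} [CommRing R]

/-- The L-series `∑ f, lam f T ^ deg f`, over all monic `f`, of a function `lam` on `F[X]`. -/
def lSeries (lam : F[X] → R) : PowerSeries R :=
  .mk fun k => ∑ p ∈ monicsOfDegree F k, lam p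

theorem sum_monicsOfDegree_dvd {lam : F[X] → R}
    (hmul : ∀ p q : F[X], p.Monic → q.Monic → lam (p * q) = lam p * lam q) {Q : F[X]}
    (hQ : Q.Monic) {a b : ℕ} (ha : Q.natDegree = a) [DecidablePred (Q ∣ ·)] :
    ∑ f ∈ monicsOfDegree F (a + b) with Q ∣ f, lam f =
      lam Q * ∑ f ∈ monicsOfDegree F b, lam f := by
  subst ha
  rw [Finset.mul_sum]
  symm
  refine Finset.sum_bij (fun g _ => Q * g) (fun g hg => ?_)
    (fun _ _ _ _ h => mul_left_cancel₀ hQ.ne_zero h) (fun f hf => ?_) fun g hg =>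
      (hmul _ _ hQ (mem_monicsOfDegree.mp hg).1).symm
  · obtain ⟨hgm, hgd⟩ := mem_monicsOfDegree.mp hg
    exact Finset.mem_filter.mpr ⟨mem_monicsOfDegree.mpr
      ⟨hQ.mul hgm, by rw [hQ.natDegree_mul hgm, hgd]⟩, dvd_mul_right _ _⟩
  · obtain ⟨hf, g, rfl⟩ := Finset.mem_filter.mp hf
    obtain ⟨hm, hd⟩ := mem_monicsOfDegree.mp hf
    have hg := hQ.of_mul_monic_left hm
    exact ⟨g, mem_monicsOfDegree.mpr
      ⟨hg, Nat.add_left_cancel ((hQ.natDegree_mul hg).symm.trans hd)⟩, rfl⟩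

omit [Finite F] in
lemma coeff_X_mul_derivative (f : PowerSeries R) (k : ℕ) :
    PowerSeries.coeff k (PowerSeries.X * PowerSeries.derivative R f) =
      k * PowerSeries.coeff k f := by
  cases k with
  | zero => simp
  | succ k =>
    rw [PowerSeries.coeff_succ_X_mul, PowerSeries.coeff_derivative, mul_comm, Nat.cast_succ]

lemma sum_antidiagonal_polyVonMangoldt {k : ℕ} {f : F[X]} (hf : f ∈ monicsOfDegree F k)
    [DecidablePred (· ∣ f)] :
    ∑ x ∈ antidiagonal k, ∑ Q ∈ monicsOfDegree F x.1 with Q ∣ f, polyVonMangoldt Q = k := by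
  classical
  obtain ⟨hm, hd⟩ := mem_monicsOfDegree.mp hf
  rw [← Finset.sum_biUnion, sum_polyVonMangoldt hm, hd]
  · intro Q
    simp only [Finset.mem_biUnion, Finset.mem_filter, mem_monicsOfDegree]
    refine ⟨fun ⟨_, _, hQ, hQf⟩ => ⟨hQ.1, hQf⟩, fun ⟨hQ, hQf⟩ =>
      ⟨(Q.natDegree, k - Q.natDegree), ?_, ⟨hQ, rfl⟩, hQf⟩⟩
    exact Finset.HasAntidiagonal.mem_antidiagonal.mpr
      (Nat.add_sub_of_le (hd ▸ natDegree_le_of_dvd hQf hm.ne_zero))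
  · refine fun x hx y hy hxy => Finset.disjoint_left.mpr fun Q hQx hQy => hxy ?_
    refine Finset.HasAntidiagonal.antidiagonal_congr hx hy |>.mpr ?_
    rw [← (mem_monicsOfDegree.mp (Finset.mem_filter.mp hQx).1).2,
      (mem_monicsOfDegree.mp (Finset.mem_filter.mp hQy).1).2]

theorem X_mul_derivative_lSeries {lam : F[X] → R}
    (hmul : ∀ p q : F[X], p.Monic → q.Monic → lam (p * q) = lam p * lam q) :
    PowerSeries.X * PowerSeries.derivative R (lSeries lam) =
      lSeries (fun Q => polyVonMangoldt Q * lam Q) * lSeries lam := by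
  classical
  ext k
  rw [coeff_X_mul_derivative]
  simp only [PowerSeries.coeff_mul, lSeries, PowerSeries.coeff_mk]
  calc (k : R) * ∑ f ∈ monicsOfDegree F k, lam f
    _ = ∑ f ∈ monicsOfDegree F k, ∑ x ∈ antidiagonal k,
          ∑ Q ∈ monicsOfDegree F x.1, if Q ∣ f then polyVonMangoldt Q * lam f else 0 := by
      rw [Finset.mul_sum]
      refine Finset.sum_congr rfl fun f hf => ?_
      simp_rw [← Finset.sum_filter, ← Finset.sum_mul, ← Nat.cast_sum,
        sum_antidiagonal_polyVonMangoldt hf]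
    _ = ∑ x ∈ antidiagonal k, ∑ Q ∈ monicsOfDegree F x.1,
          ∑ f ∈ monicsOfDegree F k, if Q ∣ f then polyVonMangoldt Q * lam f else 0 := by
      rw [Finset.sum_comm]
      exact Finset.sum_congr rfl fun x _ => Finset.sum_comm
    _ = ∑ x ∈ antidiagonal k, (∑ Q ∈ monicsOfDegree F x.1, polyVonMangoldt Q * lam Q) *
          ∑ f ∈ monicsOfDegree F x.2, lam f := by
      refine Finset.sum_congr rfl fun x hx => ?_
      rw [Finset.sum_mul]
      refine Finset.sum_congr rfl fun Q hQ => ?_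
      obtain ⟨hm, hd⟩ := mem_monicsOfDegree.mp hQ
      rw [← Finset.sum_filter, ← Finset.mul_sum, ← Finset.HasAntidiagonal.mem_antidiagonal.mp hx,
        sum_monicsOfDegree_dvd hmul hm hd, mul_assoc]

omit [Finite F] in
lemma mk_pow_mul_one_sub (a : R) :
    PowerSeries.mk (fun k => a ^ k) * (1 - PowerSeries.C a * PowerSeries.X) = 1 := by
  simpa [PowerSeries.rescale_mk, PowerSeries.rescale_X] using
    congrArg (PowerSeries.rescale a) (PowerSeries.mk_one_mul_one_sub_eq_one R)

theorem sum_polyVonMangoldt_mul_eq [IsDomain R] {lam : F[X] → R}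
    (hmul : ∀ p q : F[X], p.Monic → q.Monic → lam (p * q) = lam p * lam q) {α β : R}
    (hlam : lSeries lam = (1 - PowerSeries.C α * PowerSeries.X) *
      (1 - PowerSeries.C β * PowerSeries.X)) {m : ℕ} (hm : m ≠ 0) :
    ∑ Q ∈ monicsOfDegree F m, polyVonMangoldt Q * lam Q = -(α ^ m + β ^ m) := by
  have hL := X_mul_derivative_lSeries hmul
  have hne : lSeries lam ≠ 0 := fun h => one_ne_zero (α := R) <| by
    simpa [h] using congrArg PowerSeries.constantCoeff hlam.symm
  have key : lSeries (fun Q => polyVonMangoldt Q * lam Q) =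
      (1 - .mk (fun k => α ^ k)) + (1 - .mk fun k => β ^ k) := by
    refine mul_right_cancel₀ hne ?_
    rw [← hL, hlam]
    simp only [map_sub, Derivation.leibniz, PowerSeries.derivative_C, PowerSeries.derivative_X,
      PowerSeries.derivative_one, smul_eq_mul]
    linear_combination (1 - PowerSeries.C β * PowerSeries.X) * mk_pow_mul_one_sub α +
      (1 - PowerSeries.C α * PowerSeries.X) * mk_pow_mul_one_sub β
  have hcoeff := congrArg (PowerSeries.coeff m) key
  simp only [lSeries, PowerSeries.coeff_mk, map_add, map_sub, PowerSeries.coeff_one,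
    if_neg hm] at hcoeff
  rw [hcoeff]
  ring

end LSeries

section Charpoly

open Polynomial

variable {F K : Type*} [Field F] [Field K] [Algebra F K]

lemma charpoly_blockDiagonal {R m o : Type*} [CommRing R] [Fintype m] [DecidableEq m]
    [Fintype o] [DecidableEq o] (M : o → Matrix m m R) :
    (Matrix.blockDiagonal M).charpoly = ∏ i, (M i).charpoly := by
  simp only [Matrix.charpoly, ← Matrix.det_blockDiagonal]
  refine congrArg _ (Matrix.ext fun ⟨i, k⟩ ⟨j, k'⟩ => ?_)
  rcases eq_or_ne k k' with rfl | hk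
  · by_cases hij : i = j <;> simp [Matrix.blockDiagonal_apply, hij]
  · simp [Matrix.blockDiagonal_apply, hk]

section

variable [FiniteDimensional F K]

open IntermediateField in
theorem charpoly_lmul (z : K) :
    (Algebra.lmul F K z).charpoly = minpoly F z ^ Module.finrank F⟮z⟯ K := by
  have hz : IsIntegral F z := .of_finite F z
  set pb := adjoin.powerBasis hz
  set c := Module.finBasis F⟮z⟯ K
  have hgen : algebraMap F⟮z⟯ K pb.gen = z := by
    rw [adjoin.powerBasis_gen hz, AdjoinSimple.algebraMap_gen]
  rw [← LinearMap.charpoly_toMatrix _ (pb.basis.smulTower c)]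
  change (Algebra.leftMulMatrix (pb.basis.smulTower c) z).charpoly = _
  have hblock := Algebra.smulTower_leftMulMatrix_algebraMap pb.basis c pb.gen
  rw [hgen] at hblock
  rw [hblock, charpoly_blockDiagonal, Finset.prod_const,
    charpoly_leftMulMatrix, Finset.card_univ, Fintype.card_fin]
  congr 1
  rw [adjoin.powerBasis_gen hz, minpoly_gen]

lemma eval_charpoly_lmul (z : K) (a : F) :
    (Algebra.lmul F K z).charpoly.eval a = Algebra.norm F (algebraMap F K a - z) := by
  rw [LinearMap.eval_charpoly, ← AlgHom.commutes (Algebra.lmul F K), ← map_sub]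
  rfl

lemma nextCoeff_charpoly_lmul (z : K) :
    (Algebra.lmul F K z).charpoly.nextCoeff = -Algebra.trace F K z := by
  rw [Algebra.trace_eq_matrix_trace (Module.finBasis F K), Matrix.trace_eq_neg_charpoly_nextCoeff,
    neg_neg, Algebra.leftMulMatrix_apply, LinearMap.charpoly_toMatrix]

end

variable [Finite F] [Finite K]

lemma natCard_minpoly_eq {P : F[X]} (hP : Irreducible P) (hm : P.Monic)
    (hdvd : P.natDegree ∣ Module.finrank F K) :
    Nat.card {z : K // minpoly F z = P} = P.natDegree := by
  classical
  have hsplits : (P.map (algebraMap F K)).Splits := by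
    refine (Polynomial.splits_X_pow_nat_card_sub_X (K := K)).of_dvd
      (FiniteField.X_pow_card_sub_X_ne_zero _ Finite.one_lt_card) ?_
    have hdvd' := (hP.natDegree_dvd_iff_dvd_X_pow_card_pow_sub_X).mp hdvd
    rw [← Module.natCard_eq_pow_finrank] at hdvd'
    simpa using Polynomial.map_dvd (algebraMap F K) hdvd'
  have hsep : P.Separable := PerfectField.separable_of_irreducible hP
  have hmem : ∀ z : K, minpoly F z = P ↔ z ∈ (P.aroots K).toFinset := fun z => by
    rw [Multiset.mem_toFinset, mem_aroots]
    refine ⟨?_, fun h => (minpoly.eq_of_irreducible_of_monic hP h.2 hm).symm⟩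
    rintro rfl
    exact ⟨hP.ne_zero, minpoly.aeval _ _⟩
  rw [Nat.card_congr (Equiv.subtypeEquivRight hmem), Nat.card_eq_fintype_card, Fintype.card_coe,
    Multiset.toFinset_card_of_nodup (nodup_roots hsep.map), ← hsplits.natDegree_eq_card_roots,
    natDegree_map]

open IntermediateField in
theorem natCard_charpoly_lmul_eq {Q : F[X]} (hm : Q.Monic)
    (hQ : Q.natDegree = Module.finrank F K) :
    Nat.card {z : K // (Algebra.lmul F K z).charpoly = Q} = polyVonMangoldt Q := by
  classical
  have hirr (z : K) : Irreducible (minpoly F z) := minpoly.irreducible (.of_finite F z)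
  have hmon (z : K) : (minpoly F z).Monic := minpoly.monic (.of_finite F z)
  have hpos (z : K) : Module.finrank F⟮z⟯ K ≠ 0 := Module.finrank_pos.ne'
  by_cases hpp : IsPrimePow Q
  · obtain ⟨P, j, hP, hPm, hj, rfl⟩ := exists_irreducible_monic_pow_eq hpp hm
    rw [natDegree_pow] at hQ
    rw [polyVonMangoldt_pow hP hPm hj, ← natCard_minpoly_eq (K := K) hP hPm ⟨j, by grind⟩]
    refine Nat.card_congr (Equiv.subtypeEquivRight fun z => ?_)
    rw [charpoly_lmul]
    refine ⟨fun h => ?_, fun h => ?_⟩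
    · rw [← radical_pow_of_irreducible_of_monic (hirr z) (hmon z) (hpos z), h,
        radical_pow_of_irreducible_of_monic hP hPm hj]
    · subst h
      have hdeg := LinearMap.charpoly_natDegree (Algebra.lmul F K z)
      rw [charpoly_lmul, natDegree_pow, ← hQ] at hdeg
      rw [Nat.eq_of_mul_eq_mul_right (hirr z).natDegree_pos hdeg]
  · rw [polyVonMangoldt, if_neg hpp, Nat.card_eq_zero]
    refine .inl ⟨fun ⟨z, hz⟩ => hpp ?_⟩
    rw [← hz, charpoly_lmul]
    exact (hirr z).prime.isPrimePow.pow (hpos z)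

theorem sum_polyVonMangoldt_mul_eq_sum_charpoly [Fintype K] {R : Type*} [CommRing R]
    (lam : F[X] → R) :
    ∑ Q ∈ monicsOfDegree F (Module.finrank F K), polyVonMangoldt Q * lam Q =
      ∑ z : K, lam (Algebra.lmul F K z).charpoly := by
  classical
  have hmaps : ∀ z ∈ Finset.univ, (Algebra.lmul F K z).charpoly ∈
      monicsOfDegree F (Module.finrank F K) := fun z _ =>
    mem_monicsOfDegree.mpr ⟨LinearMap.charpoly_monic _, LinearMap.charpoly_natDegree _⟩
  rw [← Finset.sum_fiberwise_of_maps_to hmaps]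
  refine Finset.sum_congr rfl fun Q hQ => ?_
  obtain ⟨hm, hd⟩ := mem_monicsOfDegree.mp hQ
  rw [Finset.sum_congr rfl fun z hz => by rw [(Finset.mem_filter.mp hz).2], Finset.sum_const,
    nsmul_eq_mul, ← natCard_charpoly_lmul_eq hm hd, Nat.card_eq_fintype_card, Fintype.card_subtype]

end Charpoly

section MixedWeight

open Polynomial

variable {F R : Type*} [Field F] [CommRing R]

/-- The completely multiplicative function on monic polynomials with value
`χ(a) χ⁻¹(a + 1) ψ(a)` at `X + C a`; the linear coefficient of its L-series is a mixed character
sum. -/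
def mixedWeight (χ : MulChar F R) (ψ : AddChar F R) (p : F[X]) : R :=
  χ (p.eval 0) * χ⁻¹ (p.eval 1) * ψ p.nextCoeff

lemma mixedWeight_one (χ : MulChar F R) (ψ : AddChar F R) : mixedWeight χ ψ 1 = 1 := by
  simp [mixedWeight, nextCoeff]

lemma mixedWeight_mul (χ : MulChar F R) (ψ : AddChar F R) {p q : F[X]} (hp : p.Monic)
    (hq : q.Monic) : mixedWeight χ ψ (p * q) = mixedWeight χ ψ p * mixedWeight χ ψ q := by
  simp only [mixedWeight, eval_mul, map_mul, hp.nextCoeff_mul hq, AddChar.map_add_eq_mul]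
  ring

lemma mixedWeight_add (χ : MulChar F R) (ψ : AddChar F R) {k : ℕ} {p t : F[X]}
    (hd : p.natDegree = k + 1) (ht : t.natDegree ≤ k)
    (h0 : t.eval 0 = 0) (h1 : t.eval 1 = 0) :
    mixedWeight χ ψ (p + t) = ψ (t.coeff k) * mixedWeight χ ψ p := by
  have hpt : (p + t).natDegree = k + 1 := by
    rw [natDegree_add_eq_left_of_natDegree_lt (by omega), hd]
  simp only [mixedWeight, nextCoeff_of_natDegree_pos (hd ▸ k.succ_pos : 0 < p.natDegree),
    nextCoeff_of_natDegree_pos (hpt ▸ k.succ_pos : 0 < (p + t).natDegree), hd, hpt, eval_add,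
    h0, h1, add_zero, coeff_add, Nat.add_sub_cancel, AddChar.map_add_eq_mul]
  ring

theorem sum_mixedWeight_eq_zero [Finite F] [IsDomain R] (χ : MulChar F R) {ψ : AddChar F R}
    (hψ : ψ ≠ 1) (k : ℕ) : ∑ p ∈ monicsOfDegree F (k + 3), mixedWeight χ ψ p = 0 := by
  obtain ⟨c, hc⟩ := AddChar.ne_one_iff.mp hψ
  -- a polynomial vanishing at `0` and `1`: translating by it only affects the factor `ψ`
  set t : F[X] := C c * (X ^ (k + 2) - X ^ (k + 1)) with ht
  have hdeg : t.natDegree ≤ k + 2 := by rw [ht]; compute_degree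
  have hcoeff : t.coeff (k + 2) = c := by simp [ht, coeff_X_pow]
  have hmem : ∀ s : F[X], s.natDegree ≤ k + 2 → ∀ p ∈ monicsOfDegree F (k + 3),
      p + s ∈ monicsOfDegree F (k + 3) := fun s hs p hp => by
    obtain ⟨hm, hd⟩ := mem_monicsOfDegree.mp hp
    have hlt : s.natDegree < p.natDegree := by omega
    exact mem_monicsOfDegree.mpr ⟨hm.add_of_left (degree_lt_degree hlt),
      (natDegree_add_eq_left_of_natDegree_lt hlt).trans hd⟩
  have hshift : ∑ p ∈ monicsOfDegree F (k + 3), mixedWeight χ ψ p =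
      ψ c * ∑ p ∈ monicsOfDegree F (k + 3), mixedWeight χ ψ p := by
    rw [Finset.mul_sum]
    symm
    refine Finset.sum_nbij' (· + t) (· + -t) (hmem t hdeg) (hmem (-t) (by rwa [natDegree_neg]))
      (fun p _ => by simp) (fun p _ => by simp) fun p hp => ?_
    obtain ⟨-, hd⟩ := mem_monicsOfDegree.mp hp
    rw [mixedWeight_add χ ψ hd hdeg (by simp [ht]) (by simp [ht]), hcoeff]
  exact (mul_left_eq_self₀.mp hshift.symm).resolve_left hc

lemma mixedWeight_charpoly_lmul {K : Type*} [Field K] [Algebra F K] [FiniteDimensional F K]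
    (χ : MulChar F R) (ψ : AddChar F R) (z : K) :
    mixedWeight χ ψ (Algebra.lmul F K (-z)).charpoly =
      χ (Algebra.norm F z) * χ⁻¹ (Algebra.norm F (z + 1)) * ψ (Algebra.trace F K z) := by
  rw [mixedWeight, eval_charpoly_lmul, eval_charpoly_lmul, nextCoeff_charpoly_lmul,
    map_neg (Algebra.trace F K), neg_neg, map_zero, map_one, zero_sub, neg_neg, sub_neg_eq_add,
    add_comm 1]

variable [Finite F]

theorem exists_lSeries_mixedWeight_eq {k : Type*} [Field k] [IsAlgClosed k] [NeZero (2 : k)]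
    (χ : MulChar F k) {ψ : AddChar F k} (hψ : ψ ≠ 1) :
    ∃ α β : k, lSeries (mixedWeight χ ψ) =
      (1 - PowerSeries.C α * PowerSeries.X) * (1 - PowerSeries.C β * PowerSeries.X) := by
  set a := ∑ p ∈ monicsOfDegree F 1, mixedWeight χ ψ p with ha
  set b := ∑ p ∈ monicsOfDegree F 2, mixedWeight χ ψ p with hb
  obtain ⟨α, hα⟩ := exists_quadratic_eq_zero (b := a) (c := b) (one_ne_zero (α := k))
    (IsAlgClosed.exists_eq_mul_self _)
  refine ⟨α, -a - α, ?_⟩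
  have hpoly : (1 - PowerSeries.C α * PowerSeries.X) *
      (1 - PowerSeries.C (-a - α) * PowerSeries.X) =
      1 + PowerSeries.C a * PowerSeries.X + PowerSeries.C b * PowerSeries.X ^ 2 := by
    have hC := congrArg (PowerSeries.C (R := k)) hα
    simp only [map_add, map_mul, map_zero, map_one] at hC
    simp only [map_sub, map_neg]
    linear_combination -PowerSeries.X ^ 2 * hC
  rw [hpoly]
  ext k
  match k with
  | 0 => simp [lSeries, monicsOfDegree_zero, mixedWeight_one]
  | 1 => simp [lSeries, ← ha, PowerSeries.coeff_one, PowerSeries.coeff_X_pow]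
  | 2 => simp [lSeries, ← hb, PowerSeries.coeff_one]
  | k + 3 => simp [lSeries, sum_mixedWeight_eq_zero χ hψ, PowerSeries.coeff_one,
      PowerSeries.coeff_X_pow]

theorem sum_norm_trace_eq [IsDomain R] {K : Type*} [Field K] [Algebra F K] [Fintype K]
    {χ : MulChar F R} {ψ : AddChar F R} {α β : R} (h : lSeries (mixedWeight χ ψ) =
      (1 - PowerSeries.C α * PowerSeries.X) * (1 - PowerSeries.C β * PowerSeries.X)) :
    ∑ z : K, χ (Algebra.norm F z) * χ⁻¹ (Algebra.norm F (z + 1)) * ψ (Algebra.trace F K z) =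
      -(α ^ Module.finrank F K + β ^ Module.finrank F K) := by
  rw [← sum_polyVonMangoldt_mul_eq (fun _ _ => mixedWeight_mul χ ψ) h Module.finrank_pos.ne',
    sum_polyVonMangoldt_mul_eq_sum_charpoly, ← Equiv.sum_comp (Equiv.neg K) fun z =>
      mixedWeight χ ψ (Algebra.lmul F K z).charpoly]
  exact Finset.sum_congr rfl fun z _ => (mixedWeight_charpoly_lmul χ ψ z).symm

end MixedWeight

section PowerSums

open Filter Topology

variable {I : Type*} [Finite I]

lemma frequently_norm_pow_div_two_le_re (a : I → ℂ) :
    ∃ᶠ m : ℕ in atTop, ∀ i, ‖a i‖ ^ m / 2 ≤ (a i ^ m).re := by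
  set u : I → Circle := fun i => Circle.exp (arg (a i)) with hu
  have hnhds : {v : I → Circle | ∀ i, 1 / 2 < (v i : ℂ).re} ∈ 𝓝 1 := by
    refine IsOpen.mem_nhds ?_ fun i => by simp; norm_num
    simp only [Set.ofPred_forall]
    exact isOpen_iInter_of_finite fun i => isOpen_lt continuous_const
      (by fun_prop)
  refine ((mapClusterPt_one_atTop_pow u).frequently hnhds).mono fun m hm i => ?_
  have hai : a i ^ m = ((‖a i‖ ^ m : ℝ) : ℂ) * ((u ^ m) i : ℂ) := by
    rw [Pi.pow_apply, Circle.coe_pow, hu, Circle.coe_exp, ofReal_pow, ← mul_pow,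
      norm_mul_exp_arg_mul_I]
  rw [hai, re_ofReal_mul, div_eq_mul_one_div]
  exact mul_le_mul_of_nonneg_left (hm i).le (by positivity)

theorem norm_le_of_norm_sum_pow_le [Fintype I] (a : I → ℂ) {R C : ℝ} (hR : 0 < R)
    (h : ∀ᶠ m : ℕ in atTop, ‖∑ i, a i ^ m‖ ≤ C * R ^ m) (j : I) : ‖a j‖ ≤ R := by
  by_contra! hj
  have hlarge : ∀ᶠ m : ℕ in atTop, 2 * C < (‖a j‖ / R) ^ m :=
    (tendsto_pow_atTop_atTop_of_one_lt ((one_lt_div hR).mpr hj)).eventually_gt_atTop _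
  obtain ⟨m, hre, hm, hlt⟩ :=
    ((frequently_norm_pow_div_two_le_re a).and_eventually (h.and hlarge)).exists
  have hle : ‖a j‖ ^ m / 2 ≤ C * R ^ m :=
    calc ‖a j‖ ^ m / 2 ≤ (a j ^ m).re := hre j
      _ ≤ ∑ i, (a i ^ m).re := Finset.single_le_sum (f := fun i => (a i ^ m).re)
          (fun i _ => (by positivity : 0 ≤ ‖a i‖ ^ m / 2).trans (hre i)) (Finset.mem_univ j)
      _ = (∑ i, a i ^ m).re := (re_sum _ _).symm
      _ ≤ C * R ^ m := (re_le_norm _).trans hm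
  rw [div_pow, lt_div_iff₀ (by positivity)] at hlt
  linarith

end PowerSums

section Characters

lemma sum_mulChar_mul_inv_eq {F R : Type*} [Field F] [DecidableEq F] [Finite F] [CommRing R]
    [IsDomain R] [HasEnoughRootsOfUnity R (Monoid.exponent Fˣ)] [Fintype (MulChar F R)] (u v : F) :
    ∑ χ : MulChar F R, χ u * χ⁻¹ v = if u = v ∧ u ≠ 0 then (Nat.card F : R) - 1 else 0 := by
  simp only [MulChar.inv_apply', ← map_mul]
  split_ifs with h
  · obtain ⟨rfl, hu⟩ := h
    simp only [mul_inv_cancel₀ hu, map_one, Finset.sum_const, Finset.card_univ, nsmul_one]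
    rw [← Nat.card_eq_fintype_card, MulChar.card_eq_card_units_of_hasEnoughRootsOfUnity,
      Nat.card_units, Nat.cast_sub Nat.card_pos, Nat.cast_one]
  · rcases eq_or_ne v 0 with rfl | hv
    · simp [MulChar.map_zero]
    have hne : u * v⁻¹ ≠ 1 := fun h1 => by
      obtain rfl := (mul_inv_eq_one₀ hv).mp h1
      exact h ⟨rfl, hv⟩
    obtain ⟨χ₀, hχ₀⟩ := MulChar.exists_apply_ne_one_of_hasEnoughRootsOfUnity F R hne
    refine (mul_left_eq_self₀.mp ?_).resolve_left hχ₀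
    rw [Finset.mul_sum]
    exact Fintype.sum_equiv (Equiv.mulLeft χ₀) _ _ fun χ => by simp [MulChar.mul_apply]

lemma exists_mulShift_eq {F : Type*} [Field F] [Finite F] {ψ₀ : AddChar F ℂ} (h : ψ₀ ≠ 1)
    (ψ : AddChar F ℂ) : ∃ c, ψ₀.mulShift c = ψ := by
  cases nonempty_fintype F
  have hinj := AddChar.to_mulShift_inj_of_isPrimitive (AddChar.IsPrimitive.of_ne_one h)
  exact ((Fintype.bijective_iff_injective_and_card _).mpr ⟨hinj, AddChar.card_eq.symm⟩).2 ψ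

variable (K R : Type*) [Field K] [Algebra (ZMod 2) K] [CommRing R]

/-- The canonical additive character `x ↦ (-1) ^ Tr(x)` of a field of characteristic two, where
`Tr` is the absolute trace. -/
def traceSign : AddChar K R :=
  (AddChar.zmodChar 2 (neg_one_sq : (-1 : R) ^ 2 = 1)).compAddMonoidHom
    (Algebra.trace (ZMod 2) K).toAddMonoidHom

variable {K R}

lemma traceSign_apply (z : K) : traceSign K R z = (-1) ^ (Algebra.trace (ZMod 2) K z).val := rfl

lemma ofReal_traceSign (z : K) : ((traceSign K ℝ z : ℝ) : ℂ) = traceSign K ℂ z := by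
  simp [traceSign_apply]

variable [Finite K]

lemma traceSign_sq (z : K) : traceSign K R (z ^ 2) = traceSign K R z := by
  have h := Algebra.trace_eq_of_algEquiv (FiniteField.frobeniusAlgEquivOfAlgebraic (ZMod 2) K) z
  simp only [FiniteField.coe_frobeniusAlgEquivOfAlgebraic, ZMod.card] at h
  rw [traceSign_apply, traceSign_apply, h]

lemma traceSign_ne_one [NeZero (2 : R)] : traceSign K R ≠ 1 := by
  obtain ⟨e, he⟩ := Algebra.trace_surjective (ZMod 2) K 1
  refine AddChar.ne_one_iff.mpr ⟨e, ?_⟩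
  rw [traceSign_apply, he, ZMod.val_one, pow_one]
  exact fun h => two_ne_zero (α := R) (by linear_combination -h)

lemma traceSign_algebraMap_mul {F : Type*} [Field F] [Algebra (ZMod 2) F] [Algebra F K]
    (c : F) (z : K) :
    traceSign K R (algebraMap F K c * z) = traceSign F R (c * Algebra.trace F K z) := by
  have : Finite F := .of_injective _ (algebraMap F K).injective
  rw [traceSign_apply, traceSign_apply, ← Algebra.trace_trace (S := F), ← Algebra.smul_def,
    map_smul, smul_eq_mul]

end Characters

section Weil

variable {F : Type*} [Field F]

lemma norm_sum_mulChar_norm_trace_le [Algebra (ZMod 2) F] {K : Type*} [Field K] [Algebra F K]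
    [Fintype K] [Finite F] [Fintype (MulChar F ℂ)] {ψ : AddChar F ℂ} (hψ : ψ ≠ 1)
    {m r : ℕ} (hm : m ≠ 0) (hF : Nat.card F = 2 ^ m) (hK : Nat.card K = (2 ^ r) ^ 2)
    (hR : (2 ^ m) ^ 2 ≤ 2 ^ r) :
    ‖∑ χ : MulChar F ℂ, ∑ z : K,
      χ (Algebra.norm F z) * χ⁻¹ (Algebra.norm F (z + 1)) * ψ (Algebra.trace F K z)‖ ≤
      3 * 2 ^ m * 2 ^ r := by
  classical
  let : Algebra (ZMod 2) K := Algebra.compHom K (algebraMap (ZMod 2) F)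
  have : CharP K 2 := charP_of_injective_algebraMap (algebraMap (ZMod 2) K).injective 2
  obtain ⟨c, rfl⟩ := exists_mulShift_eq (traceSign_ne_one (K := F) (R := ℂ)) ψ
  have hc : algebraMap F K c ≠ 0 := by
    rw [map_ne_zero]
    rintro rfl
    exact hψ (AddChar.mulShift_zero _)
  have hcond : ∀ z : K, (Algebra.norm F z = Algebra.norm F (z + 1) ∧ Algebra.norm F z ≠ 0) ↔
      Algebra.norm F z = Algebra.norm F (z + 1) := fun z => by
    refine and_iff_left_of_imp fun h h0 => ?_
    rw [h0, eq_comm] at h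
    rw [Algebra.norm_eq_zero_iff] at h h0
    simp [h0] at h
  have heq : ∑ χ : MulChar F ℂ, ∑ z : K, χ (Algebra.norm F z) * χ⁻¹ (Algebra.norm F (z + 1)) *
      (traceSign F ℂ).mulShift c (Algebra.trace F K z) =
      (((2 ^ m - 1) * ∑ z : K with Algebra.norm F z = Algebra.norm F (z + 1),
        traceSign K ℝ (algebraMap F K c * z) : ℝ) : ℂ) := by
    rw [Finset.sum_comm]
    simp only [← Finset.sum_mul, sum_mulChar_mul_inv_eq, hcond, AddChar.mulShift_apply,
      ← traceSign_algebraMap_mul, hF, ite_mul, zero_mul, ← Finset.sum_filter, ← Finset.mul_sum]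
    simp [ofReal_traceSign]
  rw [heq, norm_real, Real.norm_eq_abs, abs_mul,
    abs_of_nonneg (sub_nonneg.mpr (one_le_pow₀ one_le_two))]
  exact abs_sum_addChar_norm_eq_le traceSign_ne_one traceSign_sq hm hF hK hR hc

lemma norm_sum_mulChar_pow_add_pow_le [Algebra (ZMod 2) F] [Finite F] [Fintype (MulChar F ℂ)]
    {ψ : AddChar F ℂ} (hψ : ψ ≠ 1) {α β : MulChar F ℂ → ℂ} (h : ∀ χ, lSeries (mixedWeight χ ψ) =
      (1 - PowerSeries.C (α χ) * PowerSeries.X) * (1 - PowerSeries.C (β χ) * PowerSeries.X))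
    {k : ℕ} (hk : 2 ≤ k) :
    ‖∑ χ, (α χ ^ (2 * k) + β χ ^ (2 * k))‖ ≤ 3 * Nat.card F * (Nat.card F) ^ k := by
  have : CharP F 2 := charP_of_injective_algebraMap (algebraMap (ZMod 2) F).injective 2
  have : NeZero (2 * k) := ⟨by omega⟩
  cases nonempty_fintype F
  obtain ⟨m, -, hF⟩ := FiniteField.card F 2
  rw [← Nat.card_eq_fintype_card] at hF
  set K := FiniteField.Extension F 2 (2 * k)
  let : Fintype K := .ofFinite K
  have hK : Nat.card K = (2 ^ (m * k)) ^ 2 := by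
    rw [FiniteField.natCard_extension, hF, ← pow_mul, ← pow_mul]
    ring
  have hfr : Module.finrank F K = 2 * k := FiniteField.finrank_extension F 2 (2 * k)
  have hle := norm_sum_mulChar_norm_trace_le (K := K) hψ m.ne_zero hF hK
    (by rw [← pow_mul]; gcongr; omega)
  simp only [fun χ => sum_norm_trace_eq (K := K) (h χ), hfr,
    Finset.sum_neg_distrib, norm_neg] at hle
  rwa [hF, Nat.cast_pow, Nat.cast_two, ← pow_mul]

/-- The mixed character sum `∑ a, χ(a) χ⁻¹(a + b) ψ(a)`. -/
def mixedSum {R : Type*} [CommRing R] [Fintype F] (χ : MulChar F R) (ψ : AddChar F R) (b : F) :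
    R :=
  ∑ a, χ a * χ⁻¹ (a + b) * ψ a

theorem norm_mixedSum_one_le [CharP F 2] [Fintype F] (χ : MulChar F ℂ) {ψ : AddChar F ℂ}
    (hψ : ψ ≠ 1) : ‖mixedSum χ ψ 1‖ ≤ 2 * √(Nat.card F) := by
  let : Algebra (ZMod 2) F := ZMod.algebra F 2
  let : Fintype (MulChar F ℂ) := .ofFinite _
  choose α β h using fun χ : MulChar F ℂ => exists_lSeries_mixedWeight_eq χ hψ
  have hroot := norm_le_of_norm_sum_pow_le (Sum.elim (fun χ => α χ ^ 2) fun χ => β χ ^ 2)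
    (R := Nat.card F) (C := 3 * Nat.card F) (by exact_mod_cast Nat.card_pos)
    (Filter.eventually_atTop.mpr ⟨2, fun k hk => by
      simpa [Fintype.sum_sum_type, ← pow_mul, Finset.sum_add_distrib] using
        norm_sum_mulChar_pow_add_pow_le hψ h hk⟩)
  have hα : ‖α χ‖ ≤ √(Nat.card F) := Real.le_sqrt_of_sq_le (by simpa using hroot (.inl χ))
  have hβ : ‖β χ‖ ≤ √(Nat.card F) := Real.le_sqrt_of_sq_le (by simpa using hroot (.inr χ))
  have hsum : mixedSum χ ψ 1 = -(α χ + β χ) := by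
    simpa [mixedSum] using sum_norm_trace_eq (K := F) (h χ)
  rw [hsum, norm_neg, two_mul]
  exact norm_add_le_of_le hα hβ

section Degenerate

variable {R : Type*} [CommRing R] (χ : MulChar F R)

lemma mulChar_mul_inv_self {a : F} (ha : a ≠ 0) : χ a * χ⁻¹ a = 1 := by
  rw [MulChar.inv_apply', ← map_mul, mul_inv_cancel₀ ha, map_one]

variable [Fintype F]

lemma mixedSum_zero (ψ : AddChar F R) : mixedSum χ ψ 0 = ∑ a, ψ a - 1 := by
  classical
  have hterm : ∀ a, χ a * χ⁻¹ (a + 0) * ψ a = ψ a - if a = 0 then 1 else 0 := fun a => by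
    split_ifs with ha
    · simp [ha, MulChar.map_zero]
    · rw [add_zero, mulChar_mul_inv_self χ ha, one_mul, sub_zero]
  simp only [mixedSum, hterm, Finset.sum_sub_distrib, Finset.sum_ite_eq', Finset.mem_univ, if_true]

variable {χ} in
lemma mixedSum_one_of_ne_zero [IsDomain R] (hχ : χ ≠ 1) {b : F} (hb : b ≠ 0) :
    mixedSum χ 1 b = -1 := by
  classical
  have hterm : ∀ a, χ (a - b) * χ⁻¹ a = χ (1 - b * a⁻¹) - if a = 0 then 1 else 0 := fun a => by
    split_ifs with ha
    · simp [ha, MulChar.map_zero]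
    · rw [MulChar.inv_apply', ← map_mul, sub_mul, mul_inv_cancel₀ ha, sub_zero]
  have hsum : ∑ a, χ (1 - b * a⁻¹) = 0 := by
    rw [← MulChar.sum_eq_zero_of_ne_one hχ]
    exact Equiv.sum_comp ((Equiv.inv F).trans ((Equiv.mulLeft₀ b hb).trans (Equiv.subLeft 1))) χ
  rw [mixedSum, ← Equiv.sum_comp (Equiv.subRight b)]
  simp [hterm, hsum]

lemma mixedSum_eq_mulShift (ψ : AddChar F R) {b : F} (hb : b ≠ 0) :
    mixedSum χ ψ b = mixedSum χ (ψ.mulShift b) 1 := by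
  rw [mixedSum, ← Equiv.sum_comp (Equiv.mulLeft₀ b hb)]
  refine Finset.sum_congr rfl fun a _ => ?_
  rw [Equiv.mulLeft₀_apply, ← mul_add_one, map_mul, map_mul, AddChar.mulShift_apply]
  linear_combination χ a * χ⁻¹ (a + 1) * ψ (b * a) * mulChar_mul_inv_self χ hb

end Degenerate

theorem norm_mixedSum_le [CharP F 2] [Fintype F] {χ : MulChar F ℂ} (hχ : χ ≠ 1) {ψ : AddChar F ℂ}
    {b : F} (h : b ≠ 0 ∨ ψ ≠ 1) : ‖mixedSum χ ψ b‖ ≤ 2 * √(Nat.card F) := by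
  have hone : 1 ≤ 2 * √(Nat.card F) := by
    have : 1 ≤ √(Nat.card F) := Real.one_le_sqrt.mpr (by exact_mod_cast Nat.card_pos)
    linarith
  rcases eq_or_ne b 0 with rfl | hb
  · rw [mixedSum_zero, AddChar.sum_eq_zero_of_ne_one (h.resolve_left (· rfl))]
    simpa using hone
  rcases eq_or_ne ψ 1 with rfl | hψ
  · rw [mixedSum_one_of_ne_zero hχ hb]
    simpa using hone
  rw [mixedSum_eq_mulShift χ ψ hb]
  exact norm_mixedSum_one_le χ (AddChar.IsPrimitive.of_ne_one hψ hb)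

end Weil

section Parseval

open ComplexConjugate

theorem sum_norm_sum_addChar_mul_sq {G : Type*} [AddCommGroup G] [Fintype G] (D : G → ℂ) :
    ∑ θ : AddChar G ℂ, ‖∑ x, θ x * D x‖ ^ 2 = Fintype.card G * ∑ x, ‖D x‖ ^ 2 := by
  classical
  have hexpand : ∀ θ : AddChar G ℂ, (‖∑ x, θ x * D x‖ : ℂ) ^ 2 =
      ∑ x, ∑ y, θ (x - y) * (D x * conj (D y)) := fun θ => by
    rw [← mul_conj', map_sum, Finset.sum_mul_sum]
    refine Finset.sum_congr rfl fun x _ => Finset.sum_congr rfl fun y _ => ?_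
    rw [map_mul, ← AddChar.map_neg_eq_conj, sub_eq_add_neg, AddChar.map_add_eq_mul]
    ring
  rw [← ofReal_inj]
  push_cast
  simp_rw [hexpand]
  rw [Finset.sum_comm, Finset.mul_sum]
  refine Finset.sum_congr rfl fun x _ => ?_
  rw [Finset.sum_comm]
  simp [← Finset.sum_mul, AddChar.sum_apply_eq_ite, sub_eq_zero, mul_conj']

end Parseval

section Purity

open ComplexConjugate

variable {κ : Type*} [DecidableEq κ] (A : Finset κ)

lemma mergeCfg_zero_zero : mergeCfg A 0 0 = 0 := by
  ext i
  simp [mergeCfg]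

lemma mergeCfg_add (x a : {i // i ∈ A} → ZMod 2) (y : {i // i ∉ A} → ZMod 2) :
    mergeCfg A (x + a) y = mergeCfg A x y + mergeCfg A a 0 := by
  ext i
  by_cases hi : i ∈ A <;> simp [mergeCfg, hi]

lemma mergeCfg_comp_val (x : {i // i ∈ A} → ZMod 2) (y : {i // i ∉ A} → ZMod 2) :
    mergeCfg A x y ∘ Subtype.val = x := by
  ext i
  simp [mergeCfg, i.2]

/-- The factorization `𝔽₂^A × 𝔽₂^{Aᶜ} ≃ 𝔽₂ⁿ` of configurations given by `mergeCfg`. -/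
def mergeCfgEquiv : ({i // i ∈ A} → ZMod 2) × ({i // i ∉ A} → ZMod 2) ≃ (κ → ZMod 2) where
  toFun p := mergeCfg A p.1 p.2
  invFun v := (v ∘ Subtype.val, v ∘ Subtype.val)
  left_inv p := by ext i <;> simp [mergeCfg, i.2]
  right_inv v := by ext i; simp [mergeCfg]

variable [Fintype κ] (φ : (κ → ZMod 2) → ℂ)

/-- The coefficient of the state `φ` at the Pauli operator on the qubits in `A` that translates
configurations by `a` and multiplies them by the sign character `θ`. -/
def pauliCoeff (a : {i // i ∈ A} → ZMod 2) (θ : AddChar ({i // i ∈ A} → ZMod 2) ℂ) : ℂ :=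
  ∑ v : κ → ZMod 2, θ (v ∘ Subtype.val) * (φ v * conj (φ (v + mergeCfg A a 0)))

lemma pauliCoeff_eq_sum_rdm (a : {i // i ∈ A} → ZMod 2)
    (θ : AddChar ({i // i ∈ A} → ZMod 2) ℂ) :
    pauliCoeff A φ a θ = ∑ x, θ x * rdm A φ x (x + a) := by
  rw [pauliCoeff, ← (mergeCfgEquiv A).sum_comp, Fintype.sum_prod_type]
  simp only [mergeCfgEquiv, Equiv.coe_fn_mk, mergeCfg_comp_val, ← mergeCfg_add, rdm,
    Matrix.of_apply, Finset.mul_sum]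

lemma isHermitian_rdm : (rdm A φ).IsHermitian := by
  ext x x'
  simp [rdm, mul_comm]

theorem re_trace_rdm_mul_rdm :
    (rdm A φ * rdm A φ).trace.re = (2 ^ A.card)⁻¹ * ∑ a, ∑ θ, ‖pauliCoeff A φ a θ‖ ^ 2 := by
  have hcard : (Fintype.card ({i // i ∈ A} → ZMod 2) : ℝ) = 2 ^ A.card := by simp
  simp only [pauliCoeff_eq_sum_rdm, sum_norm_sum_addChar_mul_sq]
  rw [← Finset.mul_sum, hcard, inv_mul_cancel_left₀ (by positivity), Finset.sum_comm]
  simp only [Matrix.trace, Matrix.diag_apply, Matrix.mul_apply, re_sum]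
  refine Finset.sum_congr rfl fun x _ => ?_
  rw [← Equiv.sum_comp (Equiv.addLeft x)]
  refine Finset.sum_congr rfl fun a _ => ?_
  rw [Equiv.coe_addLeft, ← (isHermitian_rdm A φ).apply (x + a) x, ← starRingEnd_apply, mul_conj',
    ← ofReal_pow, ofReal_re]

variable {A φ}

theorem re_trace_rdm_mul_rdm_le {B : ℝ} (h1 : ‖pauliCoeff A φ 0 1‖ ≤ 1)
    (hB : ∀ a θ, a ≠ 0 ∨ θ ≠ 1 → ‖pauliCoeff A φ a θ‖ ^ 2 ≤ B) :
    (rdm A φ * rdm A φ).trace.re ≤ (2 ^ A.card)⁻¹ * (1 + (4 ^ A.card - 1) * B) := by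
  classical
  rw [re_trace_rdm_mul_rdm, ← Fintype.sum_prod_type' (f := fun a θ => ‖pauliCoeff A φ a θ‖ ^ 2),
    ← Finset.add_sum_erase _ _ (Finset.mem_univ (0, 1))]
  have hcard : ((Finset.univ.erase ((0, 1) : ({i // i ∈ A} → ZMod 2) ×
      AddChar ({i // i ∈ A} → ZMod 2) ℂ)).card : ℝ) = 4 ^ A.card - 1 := by
    rw [Finset.cast_card_erase_of_mem (Finset.mem_univ _)]
    simp [← mul_pow]
  gcongr
  · exact pow_le_one₀ (norm_nonneg _) h1
  · rw [← hcard, ← nsmul_eq_mul]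
    refine Finset.sum_le_card_nsmul _ _ _ fun p hp => hB _ _ ?_
    rw [← not_and_or]
    exact fun h => Finset.ne_of_mem_erase hp (Prod.ext h.1 h.2)

end Purity

section CharacterStates

open ComplexConjugate

variable {κ F : Type*} [Field F]

/-- The additive character of `F ≅ 𝔽₂ⁿ` that applies the sign character `θ` to the coordinates
in `A`. -/
def extendAddChar (ι : (κ → ZMod 2) ≃+ F) {A : Finset κ}
    (θ : AddChar ({i // i ∈ A} → ZMod 2) ℂ) : AddChar F ℂ :=
  (θ.compAddMonoidHom (LinearMap.funLeft (ZMod 2) (ZMod 2) Subtype.val).toAddMonoidHom)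
    |>.compAddMonoidHom ι.symm.toAddMonoidHom

variable (ι : (κ → ZMod 2) ≃+ F) (A : Finset κ)

lemma extendAddChar_apply (θ : AddChar ({i // i ∈ A} → ZMod 2) ℂ) (v : κ → ZMod 2) :
    extendAddChar ι θ (ι v) = θ (v ∘ Subtype.val) := by
  change θ (ι.symm (ι v) ∘ Subtype.val) = _
  rw [ι.symm_apply_apply]

lemma extendAddChar_one : extendAddChar ι (1 : AddChar ({i // i ∈ A} → ZMod 2) ℂ) = 1 :=
  rfl

lemma extendAddChar_ne_one {θ : AddChar ({i // i ∈ A} → ZMod 2) ℂ} (hθ : θ ≠ 1) :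
    extendAddChar ι θ ≠ 1 := by
  classical
  obtain ⟨x, hx⟩ := AddChar.ne_one_iff.1 hθ
  refine AddChar.ne_one_iff.2 ⟨ι (mergeCfg A x 0), ?_⟩
  rwa [extendAddChar_apply, mergeCfg_comp_val]

variable [DecidableEq κ]

lemma mergeCfg_zero_right_ne_zero {a : {i // i ∈ A} → ZMod 2} (ha : a ≠ 0) :
    mergeCfg A a 0 ≠ 0 := fun h => ha <| by
  rw [← mergeCfg_comp_val A a 0, h, Pi.zero_comp]

variable [Fintype κ] [Fintype F] (χ : MulChar F ℂ) {A}

lemma pauliCoeff_mulChar (N : ℝ) (hN : 0 ≤ N) (a : {i // i ∈ A} → ZMod 2)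
    (θ : AddChar ({i // i ∈ A} → ZMod 2) ℂ) :
    pauliCoeff A (fun v => χ (ι v) / √N) a θ =
      mixedSum χ (extendAddChar ι θ) (ι (mergeCfg A a 0)) / N := by
  have hsqrt : (√N : ℂ) * √N = N := by rw [← ofReal_mul, Real.mul_self_sqrt hN]
  rw [pauliCoeff, mixedSum, ← ι.toEquiv.sum_comp, Finset.sum_div]
  refine Finset.sum_congr rfl fun v _ => ?_
  rw [AddEquiv.toEquiv_eq_coe, AddEquiv.coe_toEquiv, extendAddChar_apply, map_add, map_div₀,
    conj_ofReal, starRingEnd_apply, MulChar.star_apply', div_mul_div_comm, hsqrt]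
  ring

end CharacterStates

section PurityBound

variable {κ F : Type*} [Fintype κ] [DecidableEq κ] [Field F]

theorem re_trace_rdm_mulChar_le (ι : (κ → ZMod 2) ≃+ F) {χ : MulChar F ℂ} (hχ : χ ≠ 1)
    (A : Finset κ) {φ : (κ → ZMod 2) → ℂ} (hφ : ∀ v, φ v = χ (ι v) / √(Nat.card F - 1 : ℝ)) :
    (rdm A φ * rdm A φ).trace.re ≤
      (2 ^ A.card)⁻¹ * (1 + (4 ^ A.card - 1) * (4 * Nat.card F / (Nat.card F - 1) ^ 2)) := by
  obtain rfl : φ = _ := funext hφ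
  have : Fintype F := .ofEquiv _ ι.toEquiv
  have : CharP F 2 := CharTwo.of_one_ne_zero_of_two_eq_zero one_ne_zero <| by
    rw [← one_add_one_eq_two, ← map_eq_zero_iff ι.symm ι.symm.injective, map_add]
    exact funext fun i => CharTwo.add_self_eq_zero _
  have hq : (0 : ℝ) < Nat.card F - 1 := by
    rw [sub_pos, Nat.one_lt_cast]
    exact Finite.one_lt_card
  refine re_trace_rdm_mul_rdm_le ?_ fun a θ h => ?_
  · rw [pauliCoeff_mulChar _ _ _ hq.le, mergeCfg_zero_zero, map_zero, mixedSum_zero,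
      extendAddChar_one]
    simpa [← Nat.card_eq_fintype_card] using div_self_le_one ‖(Nat.card F : ℂ) - 1‖
  · have hweil := norm_mixedSum_le hχ (h.imp
      (fun ha => (map_ne_zero_iff ι ι.injective).2 (mergeCfg_zero_right_ne_zero A ha))
      (extendAddChar_ne_one ι A))
    rw [pauliCoeff_mulChar _ _ _ hq.le, norm_div, norm_real, Real.norm_of_nonneg hq.le, div_pow]
    gcongr
    exact (pow_le_pow_left₀ (norm_nonneg _) hweil 2).trans_eq <| by
      rw [mul_pow, Real.sq_sqrt (Nat.cast_nonneg _)]; norm_num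

lemma four_mul_div_sub_one_sq_le {x : ℝ} (hx : 2 ≤ x) : 4 * x / (x - 1) ^ 2 ≤ 16 / x := by
  rw [div_le_div_iff₀ (by nlinarith) (by linarith)]
  nlinarith

lemma exists_mulChar_pow_eq {M R : Type*} [CommMonoid M] [Finite M] [CommRing R] {g : Mˣ}
    (hg : ∀ x, x ∈ Subgroup.zpowers g) {ζ : R} (hζ : ζ ^ Nat.card Mˣ = 1)
    (hζ1 : ζ ≠ 1) :
    ∃ χ : MulChar M R, χ ≠ 1 ∧ ∀ j : ℕ, χ (g ^ j : Mˣ) = ζ ^ j := by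
  classical
  have := Fintype.ofFinite M
  rw [Nat.card_eq_fintype_card] at hζ
  let u : rootsOfUnity (Fintype.card Mˣ) R := rootsOfUnity.mkOfPowEq ζ hζ
  have hspec : MulChar.ofRootOfUnity u.2 hg g = ζ := MulChar.ofRootOfUnity_spec u.2 hg
  refine ⟨.ofRootOfUnity u.2 hg, fun h => hζ1 ?_, fun j => ?_⟩
  · rw [← hspec, h, MulChar.one_apply_coe]
  · rw [Units.val_pow_eq_pow_val, map_pow, hspec]

end PurityBound

/-- Purity bound for reduced density matrices of nontrivial chi states:
`Tr(ρ_A²) ≤ 2^{−ℓ}(1 + (4^ℓ − 1)·2^{4−n})`. -/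
theorem lfsr_eigenstate_purity
    (n ℓ : ℕ) (hn : 2 ≤ n) (N : ℕ) (hN : N = 2 ^ n - 1)
    (F : Type*) [Field F] [Fintype F] [DecidableEq F]
    (hcard : Fintype.card F = 2 ^ n)
    (g : Fˣ) (hg : ∀ x : Fˣ, x ∈ Subgroup.zpowers g)
    (ω : ℂ) (hω : ω = Complex.exp (2 * Real.pi * Complex.I / N))
    (ι : (Fin n → ZMod 2) ≃+ F)
    (q : ℤ) (hq : ¬ (N : ℤ) ∣ q)
    (ψq : F → ℂ)
    (hψq0 : ψq 0 = 0)
    (hψq : ∀ j : ℕ, ψq ((g ^ j : Fˣ) : F) = ω ^ (q * j) / Real.sqrt N)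
    (A : Finset (Fin n)) (hA : A.card = ℓ) :
    ((rdm A (fun x => ψq (ι x)) * rdm A (fun x => ψq (ι x))).trace).re ≤
      ((2 : ℝ) ^ ℓ)⁻¹ * (1 + ((4 : ℝ) ^ ℓ - 1) * (2 : ℝ) ^ ((4 : ℝ) - (n : ℝ))) := by
  subst hA hω
  have hcardF : (Nat.card F : ℝ) = 2 ^ n := by simp [hcard]
  have hunits : Nat.card Fˣ = N := by rw [Nat.card_units, Nat.card_eq_fintype_card, hcard, hN]
  have hNcast : (N : ℝ) = Nat.card F - 1 := by rw [hcardF, hN, Nat.cast_pred (by positivity)]; simp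
  have hω := Complex.isPrimitiveRoot_exp N (hunits ▸ Nat.card_pos.ne')
  obtain ⟨χ, hχ, hχg⟩ := exists_mulChar_pow_eq hg (ζ := exp (2 * Real.pi * I / N) ^ q)
    (by rw [hunits, ← zpow_natCast, zpow_comm, zpow_natCast, hω.pow_eq_one, one_zpow])
    (mt (hω.zpow_eq_one_iff_dvd q).1 hq)
  have hψχ : ∀ x, ψq x = χ x / √(Nat.card F - 1 : ℝ) := fun x => by
    obtain rfl | hx := eq_or_ne x 0
    · rw [hψq0, MulChar.map_zero, zero_div]
    · lift x to Fˣ using hx.isUnit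
      obtain ⟨j, rfl⟩ := mem_powers_iff_mem_zpowers.2 (hg x)
      rw [hψq, hχg, zpow_mul, zpow_natCast, hNcast]
  refine (re_trace_rdm_mulChar_le ι hχ A fun v => hψχ (ι v)).trans ?_
  gcongr
  · exact sub_nonneg.2 (one_le_pow₀ (by norm_num))
  · rw [Real.rpow_sub two_pos, Real.rpow_natCast, ← hcardF]
    exact (four_mul_div_sub_one_sq_le (hcardF ▸ le_self_pow₀ one_le_two (by lia))).trans_eq
      (by norm_num)
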